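/- Guerra's broken replica symmetry bound: for every N ≥ 1, β ≥ 0, h ∈ ℝ, and every piecewise constant functional order parameter x, the quenched free energy of the SK model satisfies N⁻¹ E log Z_N(β,h,J) ≤ ᾱ(β,h;x). -/

import Mathlib

open MeasureTheory ProbabilityTheory Filter

noncomputable section

/-! ## Gaussian disorder -/

/-- The standard (centered, unit variance) Gaussian measure on `ℝ`. -/
def stdGauss : Measure ℝ := gaussianReal 0 1

instance : IsProbabilityMeasure stdGauss := by unfold stdGauss; infer_instance

/-- `N` i.i.d. standard Gaussian variables. -/
def gaussN (N : ℕ) : Measure (Fin N → ℝ) := Measure.pi fun _ => stdGauss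

instance (N : ℕ) : IsProbabilityMeasure (gaussN N) := by unfold gaussN; infer_instance

/-- The i.i.d. standard Gaussian couplings `J_{ij}` (only entries with `i < j` are used). -/
def gaussC (N : ℕ) : Measure (Fin N → Fin N → ℝ) := Measure.pi fun _ => gaussN N

instance (N : ℕ) : IsProbabilityMeasure (gaussC N) := by unfold gaussC; infer_instance

/-- The i.i.d. standard Gaussian one-body fields `J_i^a`, `a = 1, …, K`
(row `⟨a-1⟩ : Fin K` corresponds to the level `a` of the paper). -/
def gaussS (K N : ℕ) : Measure (Fin K → Fin N → ℝ) := Measure.pi fun _ => gaussN N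

instance (K N : ℕ) : IsProbabilityMeasure (gaussS K N) := by unfold gaussS; infer_instance

/-- I.i.d. standard Gaussian couplings indexed by subsets of sites, for the p-spin model
(only the cardinality-`p` subsets are used). -/
def gaussP (N : ℕ) : Measure (Finset (Fin N) → ℝ) := Measure.pi fun _ => stdGauss

instance (N : ℕ) : IsProbabilityMeasure (gaussP N) := by unfold gaussP; infer_instance

/-! ## Spins and overlaps -/

/-- The spin value (`±1`) of a Boolean configuration entry. -/
def spin (b : Bool) : ℝ := if b then 1 else -1

/-- The overlap `q₁₂ = N⁻¹ ∑ᵢ σᵢ⁽¹⁾ σᵢ⁽²⁾` of two replicas. -/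
def overlap (N : ℕ) (σ τ : Fin N → Bool) : ℝ := (N : ℝ)⁻¹ * ∑ i, spin (σ i) * spin (τ i)

/-! ## Piecewise constant functional order parameters and the Parisi function -/

/-- One backward step of the Parisi recursion on an interval of constancy of the
functional order parameter: from `g = f(q_a, ·)`, with value `m` of the order parameter
and `s = q_a - q`, produce `f(q, ·)`. -/
def pStep (m s : ℝ) (g : ℝ → ℝ) (y : ℝ) : ℝ :=
  if m = 0 then ∫ z, g (y + z * Real.sqrt s) ∂stdGauss
  else m⁻¹ * Real.log (∫ z, Real.exp (m * g (y + z * Real.sqrt s)) ∂stdGauss)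

/-- `parisiLevel K q m β j` is the Parisi function `f(q_{K-j}, ·; x, β)` at the node
`q_{K-j}`, obtained by `j` backward steps from the final condition `f(q_K, y) = log cosh (β y)`. -/
def parisiLevel (K : ℕ) (q m : ℕ → ℝ) (β : ℝ) : ℕ → ℝ → ℝ
  | 0 => fun y => Real.log (Real.cosh (β * y))
  | j + 1 => pStep (m (K - j)) (q (K - j) - q (K - j - 1)) (parisiLevel K q m β j)

/-- The Parisi function `f(r, y; x, β)` for a piecewise constant order parameter `x`
given by nodes `q` and values `m`:  for `q_{a-1} ≤ r ≤ q_a` it is obtained from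
`f(q_a, ·)` by one backward step with value `m_a` over a time `q_a - r`. -/
def parisiF (K : ℕ) (q m : ℕ → ℝ) (β : ℝ) (r y : ℝ) : ℝ :=
  pStep (m (sInf {a : ℕ | r ≤ q a})) (q (sInf {a : ℕ | r ≤ q a}) - r)
    (parisiLevel K q m β (K - sInf {a : ℕ | r ≤ q a})) y

/-- The functional order parameter as a function: `x(r) = m_a` for `q_{a-1} ≤ r < q_a`,
and `x(1) = m_K`. -/
def xFun (K : ℕ) (q m : ℕ → ℝ) (r : ℝ) : ℝ :=
  if 1 ≤ r then m K else m (sInf {a : ℕ | r < q a})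

/-- A piecewise constant functional order parameter:
`0 = q_0 ≤ q_1 ≤ … ≤ q_K = 1`, `0 ≤ m_1 ≤ … ≤ m_K ≤ 1`,
with the conventions `m_0 = 0`, `m_{K+1} = 1`. -/
structure OrderParam where
  K : ℕ
  hK : 1 ≤ K
  q : ℕ → ℝ
  m : ℕ → ℝ
  hq0 : q 0 = 0
  hqK : q K = 1
  hq_mono : ∀ a, a < K → q a ≤ q (a + 1)
  hm0 : m 0 = 0
  hmtop : m (K + 1) = 1
  hm1 : 0 ≤ m 1
  hm_mono : ∀ a, 1 ≤ a → a < K → m a ≤ m (a + 1)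
  hmK : m K ≤ 1

/-- Guerra's trial function `ᾱ(β, h; x) = log 2 + f(0, h; x, β) - (β²/2) ∫₀¹ r x(r) dr`. -/
def trialAlpha (K : ℕ) (q m : ℕ → ℝ) (β h : ℝ) : ℝ :=
  Real.log 2 + parisiLevel K q m β K h - β ^ 2 / 2 * ∫ r in (0 : ℝ)..1, r * xFun K q m r

/-! ## The Sherrington–Kirkpatrick model -/

/-- The SK Hamiltonian `H_N(σ, h, J) = -(1/√N) ∑_{i<j} J_{ij} σ_i σ_j - h ∑_i σ_i`. -/
def hamSK (N : ℕ) (h : ℝ) (Jc : Fin N → Fin N → ℝ) (σ : Fin N → Bool) : ℝ :=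
  -(1 / Real.sqrt N) * ∑ i, ∑ j, (if i < j then Jc i j * spin (σ i) * spin (σ j) else 0)
    - h * ∑ i, spin (σ i)

/-- The SK partition function `Z_N(β, h, J)`. -/
def ZSK (N : ℕ) (β h : ℝ) (Jc : Fin N → Fin N → ℝ) : ℝ :=
  ∑ σ : Fin N → Bool, Real.exp (-(β * hamSK N h Jc σ))

/-- The quenched average `N⁻¹ E log Z_N(β, h, J)`. -/
def quenchedFE (N : ℕ) (β h : ℝ) : ℝ :=
  (N : ℝ)⁻¹ * ∫ Jc, Real.log (ZSK N β h Jc) ∂gaussC N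

/-- The ground state energy density `e_N(J, h)`, defined by
`-e_N(J, h) = N⁻¹ min_σ H_N(σ, h, J)`. -/
def eGS (N : ℕ) (h : ℝ) (Jc : Fin N → Fin N → ℝ) : ℝ :=
  -((N : ℝ)⁻¹ * ⨅ σ : Fin N → Bool, hamSK N h Jc σ)

/-- The quenched ground state energy density `e_N(h) = E(e_N(J, h))`. -/
def eQuenched (N : ℕ) (h : ℝ) : ℝ := ∫ Jc, eGS N h Jc ∂gaussC N

/-! ## The interpolating system -/

/-- The interpolating Boltzmann factor. -/
def bFac (N K : ℕ) (β h t : ℝ) (q : ℕ → ℝ) (Jc : Fin N → Fin N → ℝ)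
    (Js : Fin K → Fin N → ℝ) (σ : Fin N → Bool) : ℝ :=
  Real.exp (β * Real.sqrt (t / N) *
        ∑ i, ∑ j, (if i < j then Jc i j * spin (σ i) * spin (σ j) else 0)
      + β * h * ∑ i, spin (σ i)
      + β * Real.sqrt (1 - t) *
          ∑ a : Fin K, Real.sqrt (q (a.val + 1) - q a.val) * ∑ i, Js a i * spin (σ i))

/-- The interpolating partition function `Z̃_N(β, h; t; x; J)`. -/
def Ztil (N K : ℕ) (β h t : ℝ) (q : ℕ → ℝ) (Jc : Fin N → Fin N → ℝ)
    (Js : Fin K → Fin N → ℝ) : ℝ :=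
  ∑ σ : Fin N → Bool, bFac N K β h t q Jc Js σ

/-- `Wrec … j` is the random variable `Z_{K-j}`:  `Z_K = Z̃_N` and
`Z_{a-1} = (E_a (Z_a^{m_a}))^{1/m_a}`, where `E_a` integrates the Gaussian row `J^a`. -/
def Wrec (N K : ℕ) (β h t : ℝ) (q m : ℕ → ℝ) :
    ℕ → (Fin N → Fin N → ℝ) → (Fin K → Fin N → ℝ) → ℝ
  | 0 => Ztil N K β h t q
  | j + 1 => fun Jc Js =>
      if hj : j < K then
        (∫ g : Fin N → ℝ,
            (Wrec N K β h t q m j Jc (Function.update Js ⟨K - 1 - j, by omega⟩ g)) ^ m (K - j)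
          ∂gaussN N) ^ (m (K - j))⁻¹
      else Wrec N K β h t q m j Jc Js

/-- `Zrec … a` is the random variable `Z_a` of the broken replica interpolation. -/
def Zrec (N K : ℕ) (β h t : ℝ) (q m : ℕ → ℝ) (a : ℕ) :
    (Fin N → Fin N → ℝ) → (Fin K → Fin N → ℝ) → ℝ :=
  Wrec N K β h t q m (K - a)

/-- The interpolating auxiliary function `α̃_N(t) = N⁻¹ E₀ log Z₀`. -/
def atilde (N K : ℕ) (β h : ℝ) (q m : ℕ → ℝ) (t : ℝ) : ℝ :=
  (N : ℝ)⁻¹ * ∫ Jc, Real.log (Wrec N K β h t q m K Jc 0) ∂gaussC N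

/-- The normalized weight `f_a = Z_a^{m_a} / E_a(Z_a^{m_a}) = Z_a^{m_a} / Z_{a-1}^{m_a}`. -/
def fWeight (N K : ℕ) (β h t : ℝ) (q m : ℕ → ℝ) (a : ℕ) (Jc : Fin N → Fin N → ℝ)
    (Js : Fin K → Fin N → ℝ) : ℝ :=
  Zrec N K β h t q m a Jc Js ^ m a / Zrec N K β h t q m (a - 1) Jc Js ^ m a

/-- The Gibbs expectation `ω(A)` of the interpolating Boltzmann factor. -/
def gibbs (N K : ℕ) (β h t : ℝ) (q : ℕ → ℝ) (A : (Fin N → Bool) → ℝ)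
    (Jc : Fin N → Fin N → ℝ) (Js : Fin K → Fin N → ℝ) : ℝ :=
  (∑ σ : Fin N → Bool, A σ * bFac N K β h t q Jc Js σ) / Ztil N K β h t q Jc Js

/-- The two-replica Gibbs product expectation `Ω(A)`. -/
def gibbs2 (N K : ℕ) (β h t : ℝ) (q : ℕ → ℝ) (A : (Fin N → Bool) → (Fin N → Bool) → ℝ)
    (Jc : Fin N → Fin N → ℝ) (Js : Fin K → Fin N → ℝ) : ℝ :=
  (∑ σ : Fin N → Bool, ∑ τ : Fin N → Bool,
      A σ τ * bFac N K β h t q Jc Js σ * bFac N K β h t q Jc Js τ) /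
    Ztil N K β h t q Jc Js ^ 2

/-- `omT1 … A j` is the partially averaged state `ω̃_{K-j}(A)`:
`ω̃_K = ω` and `ω̃_{a-1}(·) = E_a (f_a ω̃_a(·))`. -/
def omT1 (N K : ℕ) (β h t : ℝ) (q m : ℕ → ℝ) (A : (Fin N → Bool) → ℝ) :
    ℕ → (Fin N → Fin N → ℝ) → (Fin K → Fin N → ℝ) → ℝ
  | 0 => gibbs N K β h t q A
  | j + 1 => fun Jc Js =>
      if hj : j < K then
        ∫ g : Fin N → ℝ,
          fWeight N K β h t q m (K - j) Jc (Function.update Js ⟨K - 1 - j, by omega⟩ g) *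
            omT1 N K β h t q m A j Jc (Function.update Js ⟨K - 1 - j, by omega⟩ g)
          ∂gaussN N
      else omT1 N K β h t q m A j Jc Js

/-- `omT2 … A j` is the partially averaged two-replica state `Ω̃_{K-j}(A)`:
`Ω̃_K = Ω` and `Ω̃_{a-1}(·) = E_a (f_a Ω̃_a(·))`. -/
def omT2 (N K : ℕ) (β h t : ℝ) (q m : ℕ → ℝ) (A : (Fin N → Bool) → (Fin N → Bool) → ℝ) :
    ℕ → (Fin N → Fin N → ℝ) → (Fin K → Fin N → ℝ) → ℝ
  | 0 => gibbs2 N K β h t q A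
  | j + 1 => fun Jc Js =>
      if hj : j < K then
        ∫ g : Fin N → ℝ,
          fWeight N K β h t q m (K - j) Jc (Function.update Js ⟨K - 1 - j, by omega⟩ g) *
            omT2 N K β h t q m A j Jc (Function.update Js ⟨K - 1 - j, by omega⟩ g)
          ∂gaussN N
      else omT2 N K β h t q m A j Jc Js

/-- The deformed quenched average `⟨A⟩_a = E(f_1 ⋯ f_a Ω̃_a(A))` at interpolation
parameter `t`, for a function `A` of two replicas. -/
def angA (N K : ℕ) (β h t : ℝ) (q m : ℕ → ℝ) (a : ℕ)
    (A : (Fin N → Bool) → (Fin N → Bool) → ℝ) : ℝ :=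
  ∫ Jc, ∫ Js,
      (∏ b ∈ Finset.Icc 1 a, fWeight N K β h t q m b Jc Js) *
        omT2 N K β h t q m A (K - a) Jc Js
    ∂gaussS K N ∂gaussC N

/-! ## Zero temperature (ground state) objects -/

/-- The zero-temperature Parisi recursion: `parisiLevelBar K q m j` is `f̄(q_{K-j}, ·; x̄)`,
with final condition `f̄(q_K, y) = |y|`. -/
def parisiLevelBar (K : ℕ) (q m : ℕ → ℝ) : ℕ → ℝ → ℝ
  | 0 => fun y => |y|
  | j + 1 => pStep (m (K - j)) (q (K - j) - q (K - j - 1)) (parisiLevelBar K q m j)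

/-- A zero-temperature piecewise constant order parameter: nodes
`0 = q_0 ≤ … ≤ q_K = 1` and nondecreasing values `0 ≤ m̄_1 ≤ … ≤ m̄_K`
(no upper bound `1`), with the convention `m̄_0 = 0`. -/
structure ZeroTParam where
  K : ℕ
  hK : 1 ≤ K
  q : ℕ → ℝ
  m : ℕ → ℝ
  hq0 : q 0 = 0
  hqK : q K = 1
  hq_mono : ∀ a, a < K → q a ≤ q (a + 1)
  hm0 : m 0 = 0
  hm1 : 0 ≤ m 1
  hm_mono : ∀ a, 1 ≤ a → a < K → m a ≤ m (a + 1)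

/-- The zero-temperature trial function `α̃(h; x̄) = f̄(0, h; x̄) - (1/2) ∫₀¹ r x̄(r) dr`. -/
def gsTrial (K : ℕ) (q m : ℕ → ℝ) (h : ℝ) : ℝ :=
  parisiLevelBar K q m K h - 1 / 2 * ∫ r in (0 : ℝ)..1, r * xFun K q m r

/-! ## The p-spin model -/

/-- A piecewise constant functional order parameter on `[0, p/2]`:
`0 = q_0 ≤ … ≤ q_K = p/2` and `0 ≤ m_1 ≤ … ≤ m_K ≤ 1`. -/
structure POrderParam (p : ℕ) where
  K : ℕ
  hK : 1 ≤ K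
  q : ℕ → ℝ
  m : ℕ → ℝ
  hq0 : q 0 = 0
  hqK : q K = p / 2
  hq_mono : ∀ a, a < K → q a ≤ q (a + 1)
  hm1 : 0 ≤ m 1
  hm_mono : ∀ a, 1 ≤ a → a < K → m a ≤ m (a + 1)
  hmK : m K ≤ 1

/-- The p-spin Hamiltonian
`H_N(σ,h,J) = -(p!/(2N^{p-1}))^{1/2} ∑_{i_1<…<i_p} J_{i_1…i_p} σ_{i_1}⋯σ_{i_p} - h ∑_i σ_i`. -/
def hamP (p N : ℕ) (h : ℝ) (J : Finset (Fin N) → ℝ) (σ : Fin N → Bool) : ℝ :=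
  -Real.sqrt ((Nat.factorial p : ℝ) / (2 * (N : ℝ) ^ (p - 1))) *
      ∑ S ∈ Finset.powersetCard p (Finset.univ : Finset (Fin N)), J S * ∏ i ∈ S, spin (σ i)
    - h * ∑ i, spin (σ i)

/-- The p-spin partition function. -/
def ZP (p N : ℕ) (β h : ℝ) (J : Finset (Fin N) → ℝ) : ℝ :=
  ∑ σ : Fin N → Bool, Real.exp (-(β * hamP p N h J σ))

/-- The p-spin quenched average `N⁻¹ E log Z_N^{(p)}(β, h, J)`. -/
def quenchedFEP (p N : ℕ) (β h : ℝ) : ℝ :=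
  (N : ℝ)⁻¹ * ∫ J, Real.log (ZP p N β h J) ∂gaussP N

/-- The functional order parameter on `[0, p/2]` as a function. -/
def xFunP (p K : ℕ) (q m : ℕ → ℝ) (r : ℝ) : ℝ :=
  if (p : ℝ) / 2 ≤ r then m K else m (sInf {a : ℕ | r < q a})

/-- The change of variables `q̄(r)` defined by `2r = p q̄^{p-1}`. -/
def qBar (p : ℕ) (r : ℝ) : ℝ := (2 * r / p) ^ (((p : ℝ) - 1)⁻¹)

/-- The p-spin trial function
`ᾱ_p(β, h; x) = log 2 + f(0, h; x, β) - (β²/2) ∫₀^{p/2} q̄(r) x(r) dr`. -/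
def trialAlphaP (p K : ℕ) (q m : ℕ → ℝ) (β h : ℝ) : ℝ :=
  Real.log 2 + parisiLevel K q m β K h
    - β ^ 2 / 2 * ∫ r in (0 : ℝ)..((p : ℝ) / 2), qBar p r * xFunP p K q m r


/-! # Proof of Guerra's bound -/

section Abstract

variable {ι : Type*} [Fintype ι]

/-- Probability measures with all exponential moments. -/
structure Good (μ : Measure (ι → ℝ)) : Prop where
  prob : IsProbabilityMeasure μ
  exp : ∀ c : ℝ, Integrable (fun x => Real.exp (c * ‖x‖)) μ

/-- 1-Lipschitz functions for the sup norm. -/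
def Lip1 (u : (ι → ℝ) → ℝ) : Prop := ∀ y x, |u (y + x) - u y| ≤ ‖x‖

/-- The nonlinear averaging operator. -/
def TT (m : ℝ) (μ : Measure (ι → ℝ)) (u : (ι → ℝ) → ℝ) (y : ι → ℝ) : ℝ :=
  if m = 0 then ∫ x, u (y + x) ∂μ else m⁻¹ * Real.log (∫ x, Real.exp (m * u (y + x)) ∂μ)

lemma Lip1.continuous {u : (ι → ℝ) → ℝ} (hu : Lip1 u) : Continuous u := by
  have : LipschitzWith 1 u := by
    apply LipschitzWith.of_dist_le_mul
    intro x y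
    have := hu y (x - y)
    simpa [Real.dist_eq, dist_eq_norm] using this
  exact this.continuous

lemma Lip1.le {u : (ι → ℝ) → ℝ} (hu : Lip1 u) (y x : ι → ℝ) : u (y + x) ≤ u y + ‖x‖ := by
  have := abs_le.1 (hu y x); linarith [this.2]

lemma Lip1.ge {u : (ι → ℝ) → ℝ} (hu : Lip1 u) (y x : ι → ℝ) : u y - ‖x‖ ≤ u (y + x) := by
  have := abs_le.1 (hu y x); linarith [this.1]

lemma Good.norm {μ : Measure (ι → ℝ)} (hμ : Good μ) : Integrable (fun x => ‖x‖) μ := by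
  refine (hμ.exp 1).mono' (by fun_prop) (Eventually.of_forall fun x => ?_)
  have := Real.add_one_le_exp ‖x‖
  simp; linarith

lemma Lip1.mul_le {u : (ι → ℝ) → ℝ} (hu : Lip1 u) (m : ℝ) (y x : ι → ℝ) :
    m * u (y + x) ≤ m * u y + |m| * ‖x‖ := by
  have h1 : m * (u (y + x) - u y) ≤ |m| * ‖x‖ := by
    refine (le_abs_self _).trans ?_
    rw [abs_mul]
    exact mul_le_mul_of_nonneg_left (hu y x) (abs_nonneg _)
  linarith

lemma Lip1.int {u : (ι → ℝ) → ℝ} (hu : Lip1 u) {μ : Measure (ι → ℝ)} (hμ : Good μ) (y : ι → ℝ) :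
    Integrable (fun x => u (y + x)) μ := by
  have := hμ.prob
  have hc := hu.continuous
  refine (hμ.norm.add (integrable_const |u y|)).mono' (by fun_prop) (Eventually.of_forall fun x => ?_)
  have h1 := hu y x
  have h2 : |u (y + x)| ≤ |u (y + x) - u y| + |u y| := by
    have := abs_add_le (u (y + x) - u y) (u y); simpa using this
  simp; linarith

lemma Lip1.int_exp {u : (ι → ℝ) → ℝ} (hu : Lip1 u) {μ : Measure (ι → ℝ)} (hμ : Good μ) (m : ℝ)
    (y : ι → ℝ) : Integrable (fun x => Real.exp (m * u (y + x))) μ := by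
  have hc := hu.continuous
  refine ((hμ.exp |m|).const_mul (Real.exp (m * u y))).mono' (by fun_prop)
    (Eventually.of_forall fun x => ?_)
  rw [Real.norm_eq_abs, abs_of_pos (Real.exp_pos _), ← Real.exp_add]
  exact Real.exp_le_exp.2 (hu.mul_le m y x)

lemma Lip1.exp_pos {u : (ι → ℝ) → ℝ} (hu : Lip1 u) {μ : Measure (ι → ℝ)} (hμ : Good μ) (m : ℝ)
    (y : ι → ℝ) : 0 < ∫ x, Real.exp (m * u (y + x)) ∂μ := by
  have := hμ.prob
  exact integral_exp_pos (hu.int_exp hμ m y)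

lemma TT_mono {u v : (ι → ℝ) → ℝ} (hu : Lip1 u) (hv : Lip1 v) {μ : Measure (ι → ℝ)} (hμ : Good μ)
    {m : ℝ} (hm : 0 ≤ m) {c : ℝ} (h : ∀ y, u y ≤ v y + c) (y : ι → ℝ) :
    TT m μ u y ≤ TT m μ v y + c := by
  have := hμ.prob
  unfold TT
  split_ifs with h0
  · calc ∫ x, u (y + x) ∂μ ≤ ∫ x, (v (y + x) + c) ∂μ :=
          integral_mono (hu.int hμ y) ((hv.int hμ y).add (integrable_const c)) (fun x => h _)
      _ = _ := by rw [integral_add (hv.int hμ y) (integrable_const c)]; simp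
  · have hm' : 0 < m := lt_of_le_of_ne hm (Ne.symm h0)
    have h1 : ∫ x, Real.exp (m * u (y + x)) ∂μ ≤ Real.exp (m * c) * ∫ x, Real.exp (m * v (y + x)) ∂μ := by
      rw [← integral_const_mul]
      refine integral_mono (hu.int_exp hμ m y) ((hv.int_exp hμ m y).const_mul _) (fun x => ?_)
      simp only
      rw [← Real.exp_add]
      apply Real.exp_le_exp.2
      nlinarith [h (y + x)]
    have h2 := Real.log_le_log (hu.exp_pos hμ m y) h1
    rw [Real.log_mul (Real.exp_pos _).ne' (hv.exp_pos hμ m y).ne', Real.log_exp] at h2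
    calc _ ≤ m⁻¹ * (m * c + Real.log (∫ x, Real.exp (m * v (y + x)) ∂μ)) :=
          mul_le_mul_of_nonneg_left h2 (inv_nonneg.2 hm)
      _ = _ := by field_simp; ring

lemma TT_Lip1 {u : (ι → ℝ) → ℝ} (hu : Lip1 u) {μ : Measure (ι → ℝ)} (hμ : Good μ)
    {m : ℝ} (hm : 0 ≤ m) : Lip1 (TT m μ u) := by
  intro y x
  have hu' : Lip1 (fun z => u (z + x)) := by
    intro a b
    have := hu (a + x) b
    rwa [show a + x + b = a + b + x by abel] at this
  have e : TT m μ u (y + x) = TT m μ (fun z => u (z + x)) y := by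
    unfold TT
    simp only [show ∀ z, y + x + z = y + z + x from fun z => by abel]
  rw [e, abs_le]
  have h1 := TT_mono hu' hu hμ hm (c := ‖x‖) (fun z => hu.le z x) y
  have h2 := TT_mono hu hu' hμ hm (c := ‖x‖) (fun z => by linarith [hu.ge z x]) y
  constructor <;> linarith

lemma int_prod {u : (ι → ℝ) → ℝ} (hu : Lip1 u) {μ ν : Measure (ι → ℝ)} (hμ : Good μ) (hν : Good ν)
    (y : ι → ℝ) : Integrable (fun z : (ι → ℝ) × (ι → ℝ) => u (y + z.1 + z.2)) (μ.prod ν) := by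
  have := hμ.prob
  have := hν.prob
  have hc := hu.continuous
  have h1 : Integrable (fun z : (ι → ℝ) × (ι → ℝ) => ‖z.1‖) (μ.prod ν) := hμ.norm.comp_fst ν
  have h2 : Integrable (fun z : (ι → ℝ) × (ι → ℝ) => ‖z.2‖) (μ.prod ν) := hν.norm.comp_snd μ
  refine ((h1.add h2).add (integrable_const |u y|)).mono' (by fun_prop)
    (Eventually.of_forall fun x => ?_)
  have h1 := hu y (x.1 + x.2)
  have h3 := norm_add_le x.1 x.2
  rw [← add_assoc] at h1
  have h2 : |u (y + x.1 + x.2)| ≤ |u (y + x.1 + x.2) - u y| + |u y| := by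
    have := abs_add_le (u (y + x.1 + x.2) - u y) (u y); simpa using this
  simp; linarith

lemma int_exp_prod {u : (ι → ℝ) → ℝ} (hu : Lip1 u) {μ ν : Measure (ι → ℝ)} (hμ : Good μ)
    (hν : Good ν) (m : ℝ) (y : ι → ℝ) :
    Integrable (fun z : (ι → ℝ) × (ι → ℝ) => Real.exp (m * u (y + z.1 + z.2))) (μ.prod ν) := by
  have := hμ.prob
  have := hν.prob
  have hc := hu.continuous
  have h1 := ((hμ.exp |m|).mul_prod (hν.exp |m|)).const_mul (Real.exp (m * u y))
  refine h1.mono' (by fun_prop) (Eventually.of_forall fun x => ?_)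
  rw [Real.norm_eq_abs, abs_of_pos (Real.exp_pos _), ← Real.exp_add, ← Real.exp_add]
  apply Real.exp_le_exp.2
  have h1 := hu.mul_le m y (x.1 + x.2)
  have h3 := mul_le_mul_of_nonneg_left (norm_add_le x.1 x.2) (abs_nonneg m)
  rw [← add_assoc] at h1
  linarith

/-- Composition of two averaging operators as a double integral. -/
lemma TT_TT {u : (ι → ℝ) → ℝ} (hu : Lip1 u) {μ ν : Measure (ι → ℝ)} (hν : Good ν)
    (m : ℝ) (y : ι → ℝ) : TT m μ (TT m ν u) y =
      if m = 0 then ∫ x, ∫ x', u (y + x + x') ∂ν ∂μ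
      else m⁻¹ * Real.log (∫ x, ∫ x', Real.exp (m * u (y + x + x')) ∂ν ∂μ) := by
  unfold TT
  split_ifs with h0
  · rfl
  · congr 2
    refine integral_congr_ae (Eventually.of_forall fun x => ?_)
    simp only
    rw [mul_inv_cancel_left₀ h0, Real.exp_log (hu.exp_pos hν m _)]

lemma TT_comm {u : (ι → ℝ) → ℝ} (hu : Lip1 u) {μ ν : Measure (ι → ℝ)} (hμ : Good μ)
    (hν : Good ν) (m : ℝ) (y : ι → ℝ) : TT m μ (TT m ν u) y = TT m ν (TT m μ u) y := by
  have := hμ.prob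
  have := hν.prob
  rw [TT_TT hu hν, TT_TT hu hμ]
  split_ifs with h0
  · rw [integral_integral_swap (int_prod hu hμ hν y)]
    simp only [add_right_comm]
  · rw [integral_integral_swap (int_exp_prod hu hμ hν m y)]
    simp only [add_right_comm]

/-- Two-sided bound for a tilted log-moment generating function. -/
lemma tilt_bound {Ω : Type*} [MeasurableSpace Ω] {μ : Measure Ω} {X Y : Ω → ℝ} {a : ℝ}
    (ha : 0 ≤ a) (hXm : Measurable X) (hYm : Measurable Y)
    (hX : Integrable (fun x => Real.exp (X x)) μ) (hpos : 0 < ∫ x, Real.exp (X x) ∂μ)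
    (hY : ∀ x, |Y x| ≤ a) :
    (∫ x, Y x * Real.exp (X x) ∂μ) / (∫ x, Real.exp (X x) ∂μ) ≤
        Real.log (∫ x, Real.exp (X x + Y x) ∂μ) - Real.log (∫ x, Real.exp (X x) ∂μ) ∧
    Real.log (∫ x, Real.exp (X x + Y x) ∂μ) - Real.log (∫ x, Real.exp (X x) ∂μ) ≤
      (∫ x, Y x * Real.exp (X x) ∂μ) / (∫ x, Real.exp (X x) ∂μ) + 2 * a ^ 2 := by
  set Z := ∫ x, Real.exp (X x) ∂μ with hZ
  set W := ∫ x, Y x * Real.exp (X x) ∂μ with hW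
  have iY : Integrable (fun x => Y x * Real.exp (X x)) μ :=
    hX.bdd_mul hYm.aestronglyMeasurable (Eventually.of_forall fun x => hY x)
  have iXY : Integrable (fun x => Real.exp (X x + Y x)) μ := by
    refine (hX.const_mul (Real.exp a)).mono' (by fun_prop) (Eventually.of_forall fun x => ?_)
    rw [Real.norm_eq_abs, abs_of_pos (Real.exp_pos _), ← Real.exp_add]
    apply Real.exp_le_exp.2
    linarith [(abs_le.1 (hY x)).2]
  have hWle : |W| ≤ a * Z := by
    rw [hW, hZ, ← integral_const_mul, ← Real.norm_eq_abs]
    refine norm_integral_le_of_norm_le (hX.const_mul a) (Eventually.of_forall fun x => ?_)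
    rw [norm_mul, Real.norm_eq_abs, Real.norm_eq_abs, abs_of_pos (Real.exp_pos _)]
    exact mul_le_mul_of_nonneg_right (hY x) (Real.exp_pos _).le
  have low : Z * Real.exp (W / Z) ≤ ∫ x, Real.exp (X x + Y x) ∂μ := by
    have h1 : ∫ x, (Real.exp (W / Z) * ((1 - W / Z) * Real.exp (X x) + Y x * Real.exp (X x))) ∂μ ≤
        ∫ x, Real.exp (X x + Y x) ∂μ := by
      refine integral_mono (((hX.const_mul _).add iY).const_mul _) iXY (fun x => ?_)
      have h2 := Real.add_one_le_exp (Y x - W / Z)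
      simp only
      have h3 : Real.exp (X x + Y x) = Real.exp (W / Z) * (Real.exp (X x) * Real.exp (Y x - W / Z)) := by
        rw [← Real.exp_add, ← Real.exp_add]; congr 1; ring
      rw [h3]
      refine mul_le_mul_of_nonneg_left ?_ (Real.exp_pos _).le
      have := mul_le_mul_of_nonneg_left h2 (Real.exp_pos (X x)).le
      linarith
    rw [integral_const_mul, integral_add (hX.const_mul _) iY, integral_const_mul, ← hZ, ← hW] at h1
    have h4 : (1 - W / Z) * Z + W = Z := by field_simp; ring
    rw [h4] at h1
    linarith
  have hpos2 : 0 < ∫ x, Real.exp (X x + Y x) ∂μ :=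
    lt_of_lt_of_le (mul_pos hpos (Real.exp_pos _)) low
  constructor
  · have := Real.log_le_log (mul_pos hpos (Real.exp_pos _)) low
    rw [Real.log_mul hpos.ne' (Real.exp_pos _).ne', Real.log_exp] at this
    linarith
  · by_cases h1 : a ≤ 1
    · have h2 : ∫ x, Real.exp (X x + Y x) ∂μ ≤ (1 + a ^ 2) * Z + W := by
        rw [hZ, hW, ← integral_const_mul, ← integral_add (hX.const_mul _) iY]
        refine integral_mono iXY ((hX.const_mul _).add iY) (fun x => ?_)
        simp only
        have h3 := (abs_le.1 (Real.abs_exp_sub_one_sub_id_le ((hY x).trans h1))).2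
        have h4 : Y x ^ 2 ≤ a ^ 2 := by
          rw [← sq_abs]; exact pow_le_pow_left₀ (abs_nonneg _) (hY x) 2
        rw [Real.exp_add]
        have := mul_le_mul_of_nonneg_left (h3.trans h4) (Real.exp_pos (X x)).le
        linarith
      have h3 : Real.log ((∫ x, Real.exp (X x + Y x) ∂μ) / Z) ≤ W / Z + a ^ 2 := by
        refine (Real.log_le_sub_one_of_pos (div_pos hpos2 hpos)).trans ?_
        rw [sub_le_iff_le_add, div_le_iff₀ hpos]
        have : (W / Z + a ^ 2 + 1) * Z = (1 + a ^ 2) * Z + W := by field_simp; ring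
        linarith
      rw [Real.log_div hpos2.ne' hpos.ne'] at h3
      nlinarith [sq_nonneg a]
    · have h2 : ∫ x, Real.exp (X x + Y x) ∂μ ≤ Real.exp a * Z := by
        rw [hZ, ← integral_const_mul]
        refine integral_mono iXY (hX.const_mul _) (fun x => ?_)
        simp only
        rw [← Real.exp_add]
        apply Real.exp_le_exp.2
        linarith [(abs_le.1 (hY x)).2]
      have h3 := Real.log_le_log hpos2 h2
      rw [Real.log_mul (Real.exp_pos _).ne' hpos.ne', Real.log_exp] at h3
      have h4 : -a ≤ W / Z := by
        rw [le_div_iff₀ hpos]; linarith [(abs_le.1 hWle).1]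
      nlinarith

end Abstract

section Regularity

variable {ι : Type*} [Fintype ι]

/-- Quantitative `C^{1,1}` regularity with gradient in the simplex. -/
structure Reg (L : ℝ) (u : (ι → ℝ) → ℝ) (p : (ι → ℝ) → (ι → ℝ)) : Prop where
  meas : ∀ i, Measurable (fun y => p y i)
  nonneg : ∀ y i, 0 ≤ p y i
  sum : ∀ y, ∑ i, p y i = 1
  lip : Lip1 u
  quad : ∀ y x, |u (y + x) - u y - ∑ i, p y i * x i| ≤ L * ‖x‖ ^ 2

lemma simplex_abs {p : ι → ℝ} (h0 : ∀ i, 0 ≤ p i) (h1 : ∑ i, p i = 1) (x : ι → ℝ) :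
    |∑ i, p i * x i| ≤ ‖x‖ := by
  calc |∑ i, p i * x i| ≤ ∑ i, |p i * x i| := Finset.abs_sum_le_sum_abs _ _
    _ ≤ ∑ i, p i * ‖x‖ := by
        refine Finset.sum_le_sum fun i _ => ?_
        rw [abs_mul, abs_of_nonneg (h0 i)]
        exact mul_le_mul_of_nonneg_left (norm_le_pi_norm x i) (h0 i)
    _ = ‖x‖ := by rw [← Finset.sum_mul, h1, one_mul]

/-- The log-partition function. -/
def phi (y : ι → ℝ) : ℝ := Real.log (∑ i, Real.exp (y i))

lemma sum_exp_pos [Nonempty ι] (y : ι → ℝ) : 0 < ∑ i, Real.exp (y i) :=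
  Finset.sum_pos (fun _ _ => Real.exp_pos _) Finset.univ_nonempty

lemma phi_Lip1 [Nonempty ι] : Lip1 (phi : (ι → ℝ) → ℝ) := by
  have key : ∀ y x : ι → ℝ, phi (y + x) ≤ phi y + ‖x‖ := by
    intro y x
    have : ∑ i, Real.exp ((y + x) i) ≤ (∑ i, Real.exp (y i)) * Real.exp ‖x‖ := by
      rw [Finset.sum_mul]
      refine Finset.sum_le_sum fun i _ => ?_
      rw [← Real.exp_add]
      apply Real.exp_le_exp.2
      have := (le_abs_self _).trans (norm_le_pi_norm x i)
      simp only [Pi.add_apply]; linarith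
    have := Real.log_le_log (sum_exp_pos _) this
    rwa [Real.log_mul (sum_exp_pos _).ne' (Real.exp_pos _).ne', Real.log_exp] at this
  intro y x
  have h1 := key y x
  have h2 := key (y + x) (-x)
  rw [norm_neg, add_neg_cancel_right] at h2
  rw [abs_le]; constructor <;> linarith

lemma phi_Reg [Nonempty ι] : Reg 2 (phi : (ι → ℝ) → ℝ)
    (fun y i => Real.exp (y i) / ∑ j, Real.exp (y j)) where
  meas i := by fun_prop
  nonneg y i := div_nonneg (Real.exp_pos _).le (sum_exp_pos y).le
  sum y := by rw [← Finset.sum_div, div_self (sum_exp_pos y).ne']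
  lip := phi_Lip1
  quad y x := by
    let _ : MeasurableSpace ι := ⊤
    have : MeasurableSingletonClass ι := ⟨fun _ => trivial⟩
    have ic : ∀ f : ι → ℝ, ∫ i, f i ∂Measure.count = ∑ i, f i := fun f => by
      rw [integral_fintype .of_finite]; simp [measureReal_def]
    have := tilt_bound (μ := Measure.count) (X := y) (Y := x) (norm_nonneg x)
      (measurable_of_finite _) (measurable_of_finite _) .of_finite
      (by rw [ic]; exact sum_exp_pos y) (fun i => norm_le_pi_norm x i)
    simp only [ic] at this
    have e : ∑ i, Real.exp (y i) / (∑ j, Real.exp (y j)) * x i =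
        (∑ i, x i * Real.exp (y i)) / ∑ j, Real.exp (y j) := by
      rw [Finset.sum_div]; exact Finset.sum_congr rfl fun i _ => by ring
    rw [e]
    unfold phi
    simp only [Pi.add_apply]
    rw [abs_le]; constructor <;> nlinarith [this.1, this.2, sq_nonneg ‖x‖]

/-- Gradient of the averaged function. -/
def TTgrad (m : ℝ) (μ : Measure (ι → ℝ)) (u : (ι → ℝ) → ℝ) (p : (ι → ℝ) → (ι → ℝ))
    (y : ι → ℝ) (i : ι) : ℝ :=
  (∫ x, p (y + x) i * Real.exp (m * u (y + x)) ∂μ) / ∫ x, Real.exp (m * u (y + x)) ∂μ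

lemma Reg.le_one {L : ℝ} {u : (ι → ℝ) → ℝ} {p : (ι → ℝ) → (ι → ℝ)} (h : Reg L u p) (y : ι → ℝ)
    (i : ι) : p y i ≤ 1 := by
  rw [← h.sum y]
  exact Finset.single_le_sum (f := fun j => p y j) (fun j _ => h.nonneg y j) (Finset.mem_univ i)

lemma TT_Reg {L : ℝ} {u : (ι → ℝ) → ℝ} {p : (ι → ℝ) → (ι → ℝ)} (h : Reg L u p)
    {μ : Measure (ι → ℝ)} (hμ : Good μ) {m : ℝ} (hm : 0 ≤ m) (hm1 : m ≤ 1) :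
    Reg (L + 2) (TT m μ u) (TTgrad m μ u p) := by
  have hpr := hμ.prob
  have hc := h.lip.continuous
  have hms := h.meas
  have hpm : ∀ y i, Measurable (fun x => p (y + x) i) := fun y i =>
    (h.meas i).comp (measurable_const_add y)
  have ipe : ∀ y i, Integrable (fun x => p (y + x) i * Real.exp (m * u (y + x))) μ := fun y i =>
    (h.lip.int_exp hμ m y).bdd_mul (c := 1) (hpm y i).aestronglyMeasurable
      (Eventually.of_forall fun x => by
        rw [Real.norm_eq_abs, abs_of_nonneg (h.nonneg _ _)]; exact h.le_one _ _)
  refine ⟨fun i => ?_, fun y i => ?_, fun y => ?_, TT_Lip1 h.lip hμ hm, fun y x => ?_⟩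
  · unfold TTgrad
    have h1 : Measurable (Function.uncurry fun y x : ι → ℝ => Real.exp (m * u (y + x))) := by
      have : Continuous (Function.uncurry fun y x : ι → ℝ => Real.exp (m * u (y + x))) := by
        fun_prop
      exact this.measurable
    have h2 : Measurable (Function.uncurry fun y x : ι → ℝ =>
        p (y + x) i * Real.exp (m * u (y + x))) :=
      ((h.meas i).comp (measurable_fst.add measurable_snd)).mul h1
    exact (h2.stronglyMeasurable.integral_prod_right.measurable).div
      (h1.stronglyMeasurable.integral_prod_right.measurable)
  · refine div_nonneg (integral_nonneg fun x => ?_) (h.lip.exp_pos hμ m y).le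
    exact mul_nonneg (h.nonneg _ _) (Real.exp_pos _).le
  · unfold TTgrad
    rw [← Finset.sum_div, ← integral_finsetSum _ (fun i _ => ipe y i)]
    simp only [← Finset.sum_mul, h.sum, one_mul]
    exact div_self (h.lip.exp_pos hμ m y).ne'
  · set P : (ι → ℝ) → ℝ := fun z => ∑ i, p (y + z) i * x i with hP
    have hPm : Measurable P := by
      rw [hP]; exact Finset.measurable_sum _ fun i _ => (hpm y i).mul_const _
    have hPa : ∀ z, |P z| ≤ ‖x‖ := fun z => simplex_abs (h.nonneg _) (h.sum _) x
    have hq : ∀ z, |u (y + x + z) - u (y + z) - P z| ≤ L * ‖x‖ ^ 2 := fun z => by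
      have := h.quad (y + z) x
      rwa [add_right_comm] at this
    have eG : ∑ i, TTgrad m μ u p y i * x i =
        (∫ z, P z * Real.exp (m * u (y + z)) ∂μ) / ∫ z, Real.exp (m * u (y + z)) ∂μ := by
      unfold TTgrad
      simp only [hP, Finset.sum_mul, div_mul_eq_mul_div]
      rw [← Finset.sum_div, integral_finsetSum]
      · congr 1
        refine Finset.sum_congr rfl fun i _ => ?_
        rw [← integral_mul_const]
        exact integral_congr_ae (Eventually.of_forall fun z => by simp only; ring)
      · intro i _
        refine ((ipe y i).mul_const (x i)).congr (Eventually.of_forall fun z => by simp only; ring)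
    rw [eG]
    rcases eq_or_lt_of_le hm with h0 | h0
    · subst h0
      have iP : Integrable P μ := by
        have := (integrable_const (μ := μ) (‖x‖)).mono' hPm.aestronglyMeasurable
          (Eventually.of_forall hPa)
        exact this
      simp only [TT, if_true, zero_mul, Real.exp_zero, mul_one, integral_const, probReal_univ,
        smul_eq_mul, div_one]
      have iD : Integrable (fun z => u (y + x + z) - u (y + z)) μ :=
        (h.lip.int hμ _).sub (h.lip.int hμ _)
      rw [← integral_sub (h.lip.int hμ _) (h.lip.int hμ _), ← integral_sub iD iP,
        ← Real.norm_eq_abs]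
      refine (norm_integral_le_of_norm_le_const (C := L * ‖x‖ ^ 2)
        (Eventually.of_forall hq)).trans ?_
      simp only [probReal_univ, mul_one]
      nlinarith [sq_nonneg ‖x‖]
    · have tb := tilt_bound (μ := μ) (X := fun z => m * u (y + z)) (Y := fun z => m * P z)
        (a := m * ‖x‖) (by positivity) (by fun_prop) (by fun_prop) (h.lip.int_exp hμ m y)
        (h.lip.exp_pos hμ m y) (fun z => by
          rw [abs_mul, abs_of_pos h0]; exact mul_le_mul_of_nonneg_left (hPa z) hm)
      have iXY : Integrable (fun z => Real.exp (m * u (y + z) + m * P z)) μ := by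
        refine ((h.lip.int_exp hμ m y).const_mul (Real.exp (m * ‖x‖))).mono' (by fun_prop)
          (Eventually.of_forall fun z => ?_)
        rw [Real.norm_eq_abs, abs_of_pos (Real.exp_pos _), ← Real.exp_add]
        apply Real.exp_le_exp.2
        nlinarith [(abs_le.1 (hPa z)).2]
      have hpos2 : 0 < ∫ z, Real.exp (m * u (y + z) + m * P z) ∂μ := integral_exp_pos iXY
      have eW : ∫ z, m * P z * Real.exp (m * u (y + z)) ∂μ =
          m * ∫ z, P z * Real.exp (m * u (y + z)) ∂μ := by
        rw [← integral_const_mul]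
        exact integral_congr_ae (Eventually.of_forall fun z => by simp only; ring)
      rw [eW, mul_div_assoc] at tb
      set D := (∫ z, P z * Real.exp (m * u (y + z)) ∂μ) / ∫ z, Real.exp (m * u (y + z)) ∂μ with hD
      set I1 := ∫ z, Real.exp (m * u (y + z) + m * P z) ∂μ with hI1
      set I0 := ∫ z, Real.exp (m * u (y + z)) ∂μ with hI0
      have hJpos := h.lip.exp_pos hμ m (y + x)
      have u1 : Real.log (∫ z, Real.exp (m * u (y + x + z)) ∂μ) ≤ m * (L * ‖x‖ ^ 2) + Real.log I1 := by
        have : ∫ z, Real.exp (m * u (y + x + z)) ∂μ ≤ Real.exp (m * (L * ‖x‖ ^ 2)) * I1 := by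
          rw [hI1, ← integral_const_mul]
          refine integral_mono (h.lip.int_exp hμ m _) (iXY.const_mul _) fun z => ?_
          simp only
          rw [← Real.exp_add]
          apply Real.exp_le_exp.2
          nlinarith [(abs_le.1 (hq z)).2]
        have := Real.log_le_log hJpos this
        rwa [Real.log_mul (Real.exp_pos _).ne' hpos2.ne', Real.log_exp] at this
      have u2 : Real.log I1 ≤ m * (L * ‖x‖ ^ 2) + Real.log (∫ z, Real.exp (m * u (y + x + z)) ∂μ) := by
        have : I1 ≤ Real.exp (m * (L * ‖x‖ ^ 2)) * ∫ z, Real.exp (m * u (y + x + z)) ∂μ := by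
          rw [hI1, ← integral_const_mul]
          refine integral_mono iXY ((h.lip.int_exp hμ m _).const_mul _) fun z => ?_
          simp only
          rw [← Real.exp_add]
          apply Real.exp_le_exp.2
          nlinarith [(abs_le.1 (hq z)).1]
        have := Real.log_le_log hpos2 this
        rwa [Real.log_mul (Real.exp_pos _).ne' hJpos.ne', Real.log_exp] at this
      simp only [TT, if_neg h0.ne']
      rw [← hI0]
      set J := Real.log (∫ z, Real.exp (m * u (y + x + z)) ∂μ)
      have e1 : m⁻¹ * J - m⁻¹ * Real.log I0 - D = m⁻¹ * (J - Real.log I0 - m * D) := by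
        field_simp
      have e2 : (L + 2) * ‖x‖ ^ 2 = m⁻¹ * (m * ((L + 2) * ‖x‖ ^ 2)) := by field_simp
      rw [e1, abs_mul, abs_of_pos (inv_pos.2 h0), e2]
      refine mul_le_mul_of_nonneg_left ?_ (inv_nonneg.2 hm)
      have hmm : 2 * (m * ‖x‖) ^ 2 ≤ m * (2 * ‖x‖ ^ 2) := by
        nlinarith [mul_nonneg (mul_nonneg hm (sub_nonneg.2 hm1)) (sq_nonneg ‖x‖)]
      have hnn : 0 ≤ m * (2 * ‖x‖ ^ 2) := by positivity
      rw [abs_le]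
      constructor <;> linarith [tb.1, tb.2]

end Regularity

section Expansion

lemma exp_third (t : ℝ) : |Real.exp t - 1 - t - t ^ 2 / 2| ≤ |t| ^ 3 * Real.exp |t| := by
  have h := Complex.norm_exp_sub_sum_le_norm_mul_exp (t : ℂ) 3
  have e : Complex.exp (t : ℂ) - ∑ m ∈ Finset.range 3, (t : ℂ) ^ m / (m.factorial : ℂ) =
      ((Real.exp t - 1 - t - t ^ 2 / 2 : ℝ) : ℂ) := by
    simp [Finset.sum_range_succ, Nat.factorial]; ring
  rw [e, Complex.norm_real, Complex.norm_real, Real.norm_eq_abs, Real.norm_eq_abs] at h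
  exact h

lemma expansion_real {m δ L S V κ I EYv EY2v : ℝ} (hm : 0 < m) (hm1 : m ≤ 1) (hδ : 0 ≤ δ)
    (hδ1 : δ ≤ 1) (hL : 1 ≤ L) (S0 : 0 ≤ S) (V0 : 0 ≤ V) (VS : V ≤ S) (hκpos : 0 < κ)
    (EY : |EYv| ≤ L * δ ^ 2 * S) (EY2 : |EY2v - δ ^ 2 * V| ≤ 2 * L * δ ^ 3 * S)
    (hIκ : κ ≤ I) (hr : |I - 1 - m * EYv - m ^ 2 / 2 * EY2v| ≤ m ^ 3 * δ ^ 3 * S) :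
    |m⁻¹ * Real.log I - EYv - m / 2 * δ ^ 2 * V| ≤
      (2 * L * S + 16 * L ^ 2 * S ^ 2 / κ + S) * δ ^ 3 := by
  have hq0 : 0 ≤ 16 * L ^ 2 * S ^ 2 / κ := by positivity
  have hL0 : 0 ≤ L := by linarith
  have hIpos : 0 < I := hκpos.trans_le hIκ
  have m3 : m ^ 3 ≤ m ^ 2 := by nlinarith [sq_nonneg m]
  have δ3 : δ ^ 3 ≤ δ ^ 2 := by nlinarith [sq_nonneg δ]
  have δ30 : 0 ≤ δ ^ 3 := by positivity
  have δS : 0 ≤ δ ^ 3 * S := by positivity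
  have hw : |I - 1 - m * EYv - m ^ 2 / 2 * (δ ^ 2 * V)| ≤ m ^ 2 * (2 * L * S * δ ^ 3) := by
    have e : I - 1 - m * EYv - m ^ 2 / 2 * (δ ^ 2 * V) =
        (I - 1 - m * EYv - m ^ 2 / 2 * EY2v) + m ^ 2 / 2 * (EY2v - δ ^ 2 * V) := by ring
    rw [e]
    refine (abs_add_le _ _).trans ?_
    rw [abs_mul, abs_of_nonneg (by positivity : 0 ≤ m ^ 2 / 2)]
    have h1 : m ^ 2 / 2 * |EY2v - δ ^ 2 * V| ≤ m ^ 2 / 2 * (2 * L * δ ^ 3 * S) :=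
      mul_le_mul_of_nonneg_left EY2 (by positivity)
    have h2 : m ^ 3 * δ ^ 3 * S ≤ m ^ 2 * (δ ^ 3 * S) := by
      rw [mul_assoc]; exact mul_le_mul_of_nonneg_right m3 δS
    have h3 : m ^ 2 * (δ ^ 3 * S) ≤ m ^ 2 * (L * (δ ^ 3 * S)) :=
      mul_le_mul_of_nonneg_left (le_mul_of_one_le_left δS hL) (sq_nonneg m)
    nlinarith
  have hw2 : |I - 1| ≤ 4 * m * L * S * δ ^ 2 := by
    have e : I - 1 = (I - 1 - m * EYv - m ^ 2 / 2 * (δ ^ 2 * V)) + m * EYv + m ^ 2 / 2 * (δ ^ 2 * V) := by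
      ring
    rw [e]
    refine (abs_add_le _ _).trans ((add_le_add (abs_add_le _ _) le_rfl).trans ?_)
    rw [abs_mul m, abs_of_pos hm, abs_of_nonneg (by positivity : 0 ≤ m ^ 2 / 2 * (δ ^ 2 * V))]
    have mm : m ^ 2 ≤ m := by nlinarith
    have h1 : m ^ 2 * (2 * L * S * δ ^ 3) ≤ m * (2 * L * S * δ ^ 2) := by
      refine mul_le_mul mm ?_ (by positivity) hm.le
      exact mul_le_mul_of_nonneg_left δ3 (by positivity)
    have h2 : m * |EYv| ≤ m * (L * δ ^ 2 * S) := mul_le_mul_of_nonneg_left EY hm.le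
    have h3 : m ^ 2 / 2 * (δ ^ 2 * V) ≤ m * (L * δ ^ 2 * S) := by
      refine mul_le_mul (by nlinarith [sq_nonneg m]) ?_ (by positivity) hm.le
      calc δ ^ 2 * V ≤ δ ^ 2 * S := mul_le_mul_of_nonneg_left VS (sq_nonneg _)
        _ ≤ L * (δ ^ 2 * S) := le_mul_of_one_le_left (by positivity) hL
        _ = _ := by ring
    nlinarith
  have up : Real.log I ≤ I - 1 := Real.log_le_sub_one_of_pos hIpos
  have lo : (I - 1) - 16 * m ^ 2 * L ^ 2 * S ^ 2 * δ ^ 4 / κ ≤ Real.log I := by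
    have h1 := Real.one_sub_inv_le_log_of_pos hIpos
    have h2 : 1 - I⁻¹ = (I - 1) - (I - 1) ^ 2 / I := by field_simp; ring
    have h3 : (I - 1) ^ 2 / I ≤ 16 * m ^ 2 * L ^ 2 * S ^ 2 * δ ^ 4 / κ := by
      refine div_le_div₀ (by positivity) ?_ hκpos hIκ
      rw [← sq_abs]
      calc |I - 1| ^ 2 ≤ (4 * m * L * S * δ ^ 2) ^ 2 := pow_le_pow_left₀ (abs_nonneg _) hw2 2
        _ = _ := by ring
    linarith
  have e : m⁻¹ * Real.log I - EYv - m / 2 * δ ^ 2 * V =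
      m⁻¹ * (Real.log I - m * EYv - m ^ 2 / 2 * (δ ^ 2 * V)) := by field_simp
  rw [e, abs_mul, abs_of_pos (inv_pos.2 hm), inv_mul_le_iff₀ hm]
  have hd4 : 16 * m ^ 2 * L ^ 2 * S ^ 2 * δ ^ 4 / κ ≤ m * (16 * L ^ 2 * S ^ 2 / κ * δ ^ 3) := by
    have h1 : m ^ 2 * δ ^ 4 ≤ m * δ ^ 3 :=
      mul_le_mul (by nlinarith) (pow_le_pow_of_le_one hδ hδ1 (by norm_num)) (by positivity) hm.le
    calc _ = (16 * L ^ 2 * S ^ 2 / κ) * (m ^ 2 * δ ^ 4) := by ring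
      _ ≤ (16 * L ^ 2 * S ^ 2 / κ) * (m * δ ^ 3) := mul_le_mul_of_nonneg_left h1 hq0
      _ = _ := by ring
  have hm2 : m ^ 2 * (2 * L * S * δ ^ 3) ≤ m * (2 * L * S * δ ^ 3) :=
    mul_le_mul_of_nonneg_right (by nlinarith) (by positivity)
  have hmS : 0 ≤ m * (δ ^ 3 * S) := by positivity
  have hmq : 0 ≤ m * (16 * L ^ 2 * S ^ 2 / κ * δ ^ 3) := by positivity
  have hw' := abs_le.1 hw
  have ee : m * ((2 * L * S + 16 * L ^ 2 * S ^ 2 / κ + S) * δ ^ 3) =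
    m * (2 * L * S * δ ^ 3) + m * (16 * L ^ 2 * S ^ 2 / κ * δ ^ 3) + m * (δ ^ 3 * S) := by ring
  rw [ee, abs_le]
  constructor <;> linarith [hw'.1, hw'.2]

set_option maxHeartbeats 1000000 in
/-- Second order expansion of the log moment generating function. -/
lemma expansion {Ω : Type*} [MeasurableSpace Ω] (ν : Measure Ω) [IsProbabilityMeasure ν]
    (R : Ω → ℝ) (hRm : Measurable R) (hR0 : ∀ x, 0 ≤ R x)
    (hR : ∀ c : ℝ, Integrable (fun x => Real.exp (c * R x)) ν) (L : ℝ) (hL : 1 ≤ L) :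
    ∃ C : ℝ, 0 ≤ C ∧ ∀ (δ : ℝ) (Y a : Ω → ℝ), 0 ≤ δ → δ ≤ 1 → Measurable Y → Measurable a →
      (∀ x, |a x| ≤ R x) → (∫ x, a x ∂ν = 0) → (∀ x, |Y x| ≤ δ * R x) →
      (∀ x, |Y x - δ * a x| ≤ L * δ ^ 2 * (1 + R x) ^ 2) →
      |∫ x, Y x ∂ν| ≤ C * δ ^ 2 ∧ ∫ x, a x ^ 2 ∂ν ≤ C ∧
      ∀ m : ℝ, 0 < m → m ≤ 1 →
        |m⁻¹ * Real.log (∫ x, Real.exp (m * Y x) ∂ν) - ∫ x, Y x ∂ν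
          - m / 2 * δ ^ 2 * ∫ x, a x ^ 2 ∂ν| ≤ C * δ ^ 3 := by
  set S := ∫ x, (1 + R x) ^ 3 * Real.exp (R x) ∂ν with hS
  set κ := ∫ x, Real.exp (-1 * R x) ∂ν with hκ
  have iS : Integrable (fun x => (1 + R x) ^ 3 * Real.exp (R x)) ν := by
    refine ((hR 4).const_mul 1).mono' (by fun_prop) (Eventually.of_forall fun x => ?_)
    have h1 : (1 + R x) ^ 3 ≤ Real.exp (R x) ^ 3 :=
      pow_le_pow_left₀ (by linarith [hR0 x]) (by linarith [Real.add_one_le_exp (R x)]) 3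
    have h0 : 0 ≤ (1 + R x) ^ 3 * Real.exp (R x) := by have := hR0 x; positivity
    rw [Real.norm_eq_abs, abs_of_nonneg h0]
    calc _ ≤ Real.exp (R x) ^ 3 * Real.exp (R x) :=
          mul_le_mul_of_nonneg_right h1 (Real.exp_pos _).le
      _ = _ := by rw [← pow_succ, ← Real.exp_nat_mul]; norm_num
  have hκpos : 0 < κ := integral_exp_pos (hR (-1))
  have pw : ∀ x, 1 ≤ (1 + R x) ∧ 1 ≤ Real.exp (R x) := fun x =>
    ⟨by linarith [hR0 x], Real.one_le_exp (hR0 x)⟩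
  have b3 : ∀ x, (1 + R x) ^ 3 ≤ (1 + R x) ^ 3 * Real.exp (R x) := fun x =>
    le_mul_of_one_le_right (by have := hR0 x; positivity) (pw x).2
  have b2 : ∀ x, (1 + R x) ^ 2 ≤ (1 + R x) ^ 3 * Real.exp (R x) := fun x =>
    (pow_le_pow_right₀ (pw x).1 (by norm_num)).trans (b3 x)
  have b1 : ∀ x, R x ≤ (1 + R x) ^ 3 * Real.exp (R x) := fun x => by
    refine le_trans ?_ (b2 x); nlinarith [hR0 x]
  have bR2 : ∀ x, R x ^ 2 ≤ (1 + R x) ^ 3 * Real.exp (R x) := fun x => by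
    refine le_trans ?_ (b2 x); nlinarith [hR0 x]
  have S0 : 0 ≤ S := integral_nonneg fun x => by have := hR0 x; positivity
  refine ⟨2 * L * S + 16 * L ^ 2 * S ^ 2 / κ + S, by positivity, ?_⟩
  intro δ Y a hδ hδ1 hYm ham ha ha0 hY hYa
  -- integrability
  have dom : ∀ (f : Ω → ℝ) (c : ℝ), Measurable f →
      (∀ x, |f x| ≤ c * ((1 + R x) ^ 3 * Real.exp (R x))) → Integrable f ν ∧ |∫ x, f x ∂ν| ≤ c * S := by
    intro f c hf hb
    refine ⟨(iS.const_mul c).mono' hf.aestronglyMeasurable (Eventually.of_forall hb), ?_⟩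
    rw [hS, ← integral_const_mul, ← Real.norm_eq_abs]
    exact norm_integral_le_of_norm_le (iS.const_mul c) (Eventually.of_forall hb)
  have dY := dom Y δ hYm fun x => (hY x).trans (mul_le_mul_of_nonneg_left (b1 x) hδ)
  have da := dom a 1 ham fun x => by rw [one_mul]; exact (ha x).trans (b1 x)
  have da2 := dom (fun x => a x ^ 2) 1 (by fun_prop) fun x => by
    rw [one_mul, abs_of_nonneg (sq_nonneg _), ← sq_abs]
    exact (pow_le_pow_left₀ (abs_nonneg _) (ha x) 2).trans (bR2 x)
  have hY2 : ∀ x, Y x ^ 2 ≤ δ ^ 2 * R x ^ 2 := fun x => by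
    rw [← sq_abs, ← mul_pow]; exact pow_le_pow_left₀ (abs_nonneg _) (hY x) 2
  have dY2 := dom (fun x => Y x ^ 2) (δ ^ 2) (by fun_prop) fun x => by
    rw [abs_of_nonneg (sq_nonneg _)]
    exact (hY2 x).trans (mul_le_mul_of_nonneg_left (bR2 x) (sq_nonneg _))
  have dYa := dom (fun x => Y x - δ * a x) (L * δ ^ 2) (by fun_prop) fun x =>
    (hYa x).trans (mul_le_mul_of_nonneg_left (b2 x) (by positivity))
  have EY : |∫ x, Y x ∂ν| ≤ L * δ ^ 2 * S := by
    have := dYa.2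
    rwa [integral_sub dY.1 (da.1.const_mul δ), integral_const_mul, ha0, mul_zero, sub_zero] at this
  have dd := dom (fun x => Y x ^ 2 - δ ^ 2 * a x ^ 2) (2 * L * δ ^ 3) (by fun_prop) fun x => by
    have e : Y x ^ 2 - δ ^ 2 * a x ^ 2 = (Y x - δ * a x) * (Y x + δ * a x) := by ring
    have h1 : |Y x + δ * a x| ≤ 2 * δ * (1 + R x) := by
      refine (abs_add_le _ _).trans ?_
      rw [abs_mul, abs_of_nonneg hδ]
      nlinarith [hY x, ha x, mul_le_mul_of_nonneg_left (ha x) hδ]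
    rw [e, abs_mul]
    calc _ ≤ (L * δ ^ 2 * (1 + R x) ^ 2) * (2 * δ * (1 + R x)) :=
          mul_le_mul (hYa x) h1 (abs_nonneg _) (by have := hR0 x; positivity)
      _ = 2 * L * δ ^ 3 * (1 + R x) ^ 3 := by ring
      _ ≤ _ := mul_le_mul_of_nonneg_left (b3 x) (by positivity)
  set V := ∫ x, a x ^ 2 ∂ν with hV
  have V0 : 0 ≤ V := integral_nonneg fun x => sq_nonneg _
  have VS : V ≤ S := by have := (abs_le.1 da2.2).2; linarith
  have EY2 : |∫ x, Y x ^ 2 ∂ν - δ ^ 2 * V| ≤ 2 * L * δ ^ 3 * S := by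
    have := dd.2
    rwa [integral_sub dY2.1 (da2.1.const_mul _), integral_const_mul] at this
  have hq0 : 0 ≤ 16 * L ^ 2 * S ^ 2 / κ := by positivity
  have hLS : L * S ≤ 2 * L * S := by nlinarith [mul_nonneg (by linarith : (0:ℝ) ≤ L) S0]
  have hLS0 : 0 ≤ L * S := mul_nonneg (by linarith) S0
  refine ⟨?_, by linarith, ?_⟩
  · refine EY.trans ?_
    have : L * S ≤ 2 * L * S + 16 * L ^ 2 * S ^ 2 / κ + S := by linarith
    nlinarith [mul_le_mul_of_nonneg_right this (sq_nonneg δ)]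
  intro m hm hm1
  have hmY : ∀ x, |m * Y x| ≤ m * (δ * R x) := fun x => by
    rw [abs_mul, abs_of_pos hm]; exact mul_le_mul_of_nonneg_left (hY x) hm.le
  have hmYR : ∀ x, |m * Y x| ≤ R x := fun x => by
    refine (hmY x).trans ?_
    have h1 : δ * R x ≤ R x := mul_le_of_le_one_left (hR0 x) hδ1
    have h2 := mul_le_of_le_one_left (mul_nonneg hδ (hR0 x)) hm1
    linarith
  have iE : Integrable (fun x => Real.exp (m * Y x)) ν := by
    refine (hR 1).mono' (by fun_prop) (Eventually.of_forall fun x => ?_)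
    rw [Real.norm_eq_abs, abs_of_pos (Real.exp_pos _), one_mul]
    exact Real.exp_le_exp.2 ((le_abs_self _).trans (hmYR x))
  have dr := dom (fun x => Real.exp (m * Y x) - 1 - m * Y x - (m * Y x) ^ 2 / 2) (m ^ 3 * δ ^ 3)
    (by fun_prop) fun x => by
      refine (exp_third _).trans ?_
      rw [← mul_pow, ← mul_assoc, ← mul_pow]
      refine mul_le_mul ?_ (Real.exp_le_exp.2 (hmYR x)) (Real.exp_pos _).le
        (by have := hR0 x; positivity)
      refine pow_le_pow_left₀ (abs_nonneg _) ((hmY x).trans ?_) 3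
      have := mul_nonneg hm.le hδ
      nlinarith [hR0 x]
  set EYv := ∫ x, Y x ∂ν with hEYv
  set EY2v := ∫ x, Y x ^ 2 ∂ν with hEY2v
  set I := ∫ x, Real.exp (m * Y x) ∂ν with hI
  have er : ∫ x, (Real.exp (m * Y x) - 1 - m * Y x - (m * Y x) ^ 2 / 2) ∂ν =
      I - 1 - m * EYv - m ^ 2 / 2 * EY2v := by
    have i1 : Integrable (fun x => Real.exp (m * Y x) - 1) ν := iE.sub (integrable_const _)
    have i2 : Integrable (fun x => Real.exp (m * Y x) - 1 - m * Y x) ν := i1.sub (dY.1.const_mul m)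
    have e : ∀ x, (m * Y x) ^ 2 / 2 = m ^ 2 / 2 * Y x ^ 2 := fun x => by ring
    simp only [e]
    rw [integral_sub i2 (dY2.1.const_mul _), integral_sub i1 (dY.1.const_mul _),
      integral_sub iE (integrable_const _), integral_const_mul, integral_const_mul]
    simp only [integral_const, probReal_univ, smul_eq_mul, mul_one]
    rfl
  rw [er] at dr
  have hr := dr.2
  -- elementary estimates
  have hIκ : κ ≤ I := by
    rw [hκ, hI]
    refine integral_mono (hR (-1)) iE fun x => Real.exp_le_exp.2 ?_
    have := (abs_le.1 (hmYR x)).1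
    linarith
  have hfin := expansion_real hm hm1 hδ hδ1 hL S0 V0 VS hκpos EY EY2 hIκ hr
  exact hfin

end Expansion

section GaussFacts

variable {ι κ : Type*} [Fintype ι] [Fintype κ]

/-- Standard Gaussian vector. -/
def gP (κ : Type*) [Fintype κ] : Measure (κ → ℝ) := Measure.pi fun _ => stdGauss

instance : IsProbabilityMeasure (gP κ) := by unfold gP; infer_instance

/-- A linear image of a vector, scaled. -/
def lin (M : ι → κ → ℝ) (s : ℝ) (z : κ → ℝ) : ι → ℝ := fun σ => Real.sqrt s * ∑ k, M σ k * z k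

lemma lin_meas (M : ι → κ → ℝ) (s : ℝ) : Measurable (lin M s) := by
  unfold lin; fun_prop

/-- The law of the Gaussian vector with covariance `s M Mᵀ`. -/
def gam (M : ι → κ → ℝ) (s : ℝ) : Measure (ι → ℝ) := (gP κ).map (lin M s)

instance (M : ι → κ → ℝ) (s : ℝ) : IsProbabilityMeasure (gam M s) :=
  Measure.isProbabilityMeasure_map (lin_meas M s).aemeasurable

lemma stdGauss_exp_abs (c : ℝ) : Integrable (fun z : ℝ => Real.exp (c * |z|)) stdGauss := by
  unfold stdGauss
  refine ((integrable_exp_mul_gaussianReal c).add (integrable_exp_mul_gaussianReal (-c))).mono'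
    (by fun_prop) (Eventually.of_forall fun z => ?_)
  rw [Real.norm_eq_abs, abs_of_pos (Real.exp_pos _), Pi.add_apply]
  have h1 := Real.exp_pos (c * z)
  have h2 := Real.exp_pos (-c * z)
  rcases abs_cases z with h | h <;> rw [h.1]
  · linarith
  · rw [show c * -z = -c * z by ring]; linarith

lemma gP_exp_abs (c : ℝ) : Integrable (fun z : κ → ℝ => Real.exp (c * ∑ k, |z k|)) (gP κ) := by
  have h := Integrable.fintype_prod (μ := fun _ : κ => stdGauss)
    (f := fun _ z => Real.exp (c * |z|)) (fun _ => stdGauss_exp_abs c)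
  simpa only [gP, Finset.mul_sum, Real.exp_sum] using h

lemma lin_norm (M : ι → κ → ℝ) (s : ℝ) (z : κ → ℝ) :
    ‖lin M s z‖ ≤ (Real.sqrt s * ∑ σ, ∑ k, |M σ k|) * ∑ k, |z k| := by
  have h0 : 0 ≤ ∑ σ, ∑ k, |M σ k| :=
    Finset.sum_nonneg fun _ _ => Finset.sum_nonneg fun _ _ => abs_nonneg _
  have hz : 0 ≤ ∑ k, |z k| := Finset.sum_nonneg fun _ _ => abs_nonneg _
  rw [pi_norm_le_iff_of_nonneg (by positivity)]
  intro σ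
  rw [Real.norm_eq_abs]
  unfold lin
  rw [abs_mul, abs_of_nonneg (Real.sqrt_nonneg s), mul_assoc]
  refine mul_le_mul_of_nonneg_left ?_ (Real.sqrt_nonneg s)
  calc |∑ k, M σ k * z k| ≤ ∑ k, |M σ k * z k| := Finset.abs_sum_le_sum_abs _ _
    _ ≤ ∑ k, (∑ σ, ∑ k, |M σ k|) * |z k| := by
        refine Finset.sum_le_sum fun k _ => ?_
        rw [abs_mul]
        refine mul_le_mul_of_nonneg_right ?_ (abs_nonneg _)
        exact (Finset.single_le_sum (f := fun k => |M σ k|) (fun _ _ => abs_nonneg _)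
          (Finset.mem_univ k)).trans
          (Finset.single_le_sum (f := fun σ => ∑ k, |M σ k|)
            (fun _ _ => Finset.sum_nonneg fun _ _ => abs_nonneg _) (Finset.mem_univ σ))
    _ = _ := by rw [Finset.mul_sum]

lemma gam_Good (M : ι → κ → ℝ) (s : ℝ) : Good (gam M s) := by
  refine ⟨inferInstance, fun c => ?_⟩
  unfold gam
  rw [integrable_map_measure (by fun_prop) (lin_meas M s).aemeasurable]
  refine (gP_exp_abs (κ := κ) (|c| * (Real.sqrt s * ∑ σ, ∑ k, |M σ k|))).mono' ?_
    (Eventually.of_forall fun z => ?_)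
  · have := lin_meas M s
    exact (Measurable.aestronglyMeasurable (by fun_prop))
  · simp only [Function.comp]
    rw [Real.norm_eq_abs, abs_of_pos (Real.exp_pos _)]
    refine Real.exp_le_exp.2 ?_
    calc c * ‖lin M s z‖ ≤ |c| * ‖lin M s z‖ :=
          mul_le_mul_of_nonneg_right (le_abs_self c) (norm_nonneg _)
      _ ≤ |c| * ((Real.sqrt s * ∑ σ, ∑ k, |M σ k|) * ∑ k, |z k|) :=
          mul_le_mul_of_nonneg_left (lin_norm M s z) (abs_nonneg c)
      _ = _ := by ring

lemma stdGauss_map (c : ℝ) : stdGauss.map (fun z => c * z) = gaussianReal 0 (Real.toNNReal (c ^ 2)) := by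
  unfold stdGauss
  rw [gaussianReal_map_const_mul]
  congr 1
  · simp
  · ext; simp [sq_nonneg]

lemma stdGauss_stable {a b : ℝ} (ha : 0 ≤ a) (hb : 0 ≤ b) :
    (stdGauss.prod stdGauss).map (fun z : ℝ × ℝ => Real.sqrt a * z.1 + Real.sqrt b * z.2) =
      stdGauss.map (fun z => Real.sqrt (a + b) * z) := by
  have e : (fun z : ℝ × ℝ => Real.sqrt a * z.1 + Real.sqrt b * z.2) =
      (fun z : ℝ × ℝ => z.1 + z.2) ∘ (Prod.map (fun z => Real.sqrt a * z) (fun z => Real.sqrt b * z)) := by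
    ext z; simp
  rw [e, ← Measure.map_map (by fun_prop) (by fun_prop), ← Measure.map_prod_map _ _ (by fun_prop) (by fun_prop)]
  rw [stdGauss_map, stdGauss_map, stdGauss_map]
  have := gaussianReal_conv_gaussianReal (m₁ := 0) (m₂ := 0) (v₁ := Real.toNNReal (Real.sqrt a ^ 2))
    (v₂ := Real.toNNReal (Real.sqrt b ^ 2))
  rw [Measure.conv] at this
  rw [this, Real.sq_sqrt ha, Real.sq_sqrt hb, Real.sq_sqrt (by positivity), Real.toNNReal_add ha hb]
  simp

lemma gP_stable {a b : ℝ} (ha : 0 ≤ a) (hb : 0 ≤ b) :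
    ((gP κ).prod (gP κ)).map (fun z : (κ → ℝ) × (κ → ℝ) =>
      fun k => Real.sqrt a * z.1 k + Real.sqrt b * z.2 k) =
      (gP κ).map (fun z k => Real.sqrt (a + b) * z k) := by
  unfold gP
  rw [← (measurePreserving_arrowProdEquivProdArrow ℝ ℝ κ (fun _ => stdGauss)
    (fun _ => stdGauss)).map_eq, Measure.map_map (by fun_prop) (by fun_prop)]
  have e : ((fun z : (κ → ℝ) × (κ → ℝ) =>
      fun k => Real.sqrt a * z.1 k + Real.sqrt b * z.2 k) ∘
      ⇑(MeasurableEquiv.arrowProdEquivProdArrow ℝ ℝ κ)) =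
      fun w k => (fun z : ℝ × ℝ => Real.sqrt a * z.1 + Real.sqrt b * z.2) (w k) := by
    ext w k; rfl
  have hp : ∀ i : κ, IsProbabilityMeasure ((stdGauss.prod stdGauss).map
      (fun z : ℝ × ℝ => Real.sqrt a * z.1 + Real.sqrt b * z.2)) := fun i =>
    Measure.isProbabilityMeasure_map (by fun_prop)
  have hp2 : ∀ i : κ, IsProbabilityMeasure (stdGauss.map
      (fun z : ℝ => Real.sqrt (a + b) * z)) := fun i =>
    Measure.isProbabilityMeasure_map (by fun_prop)
  have r1 := Measure.pi_map_pi (μ := fun _ : κ => stdGauss.prod stdGauss)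
    (f := fun _ (z : ℝ × ℝ) => Real.sqrt a * z.1 + Real.sqrt b * z.2)
    (fun i => by fun_prop)
  have r2 := Measure.pi_map_pi (μ := fun _ : κ => stdGauss)
    (f := fun _ (z : ℝ) => Real.sqrt (a + b) * z) (fun i => by fun_prop)
  rw [stdGauss_stable ha hb] at r1
  rw [e, r1, r2]

lemma gam_eq (M : ι → κ → ℝ) {s : ℝ} :
    gam M s = ((gP κ).map (fun z k => Real.sqrt s * z k)).map (fun z σ => ∑ k, M σ k * z k) := by
  rw [Measure.map_map (by fun_prop) (by fun_prop)]
  unfold gam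
  congr 1
  ext z σ
  simp only [lin, Function.comp, Finset.mul_sum]
  exact Finset.sum_congr rfl fun k _ => by ring

lemma gam_conv (M : ι → κ → ℝ) {a b : ℝ} (ha : 0 ≤ a) (hb : 0 ≤ b) :
    ((gam M a).prod (gam M b)).map (fun z => z.1 + z.2) = gam M (a + b) := by
  rw [gam_eq M (s := a + b), ← gP_stable ha hb]
  unfold gam
  rw [Measure.map_prod_map _ _ (lin_meas M a) (lin_meas M b), Measure.map_map (by fun_prop)
    ((lin_meas M a).prodMap (lin_meas M b)), Measure.map_map (by fun_prop) (by fun_prop)]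
  congr 1
  ext z σ
  simp only [lin, Function.comp, Prod.map, Pi.add_apply, Finset.mul_sum, mul_add, Finset.sum_add_distrib]
  congr 1 <;> exact Finset.sum_congr rfl fun k _ => by ring

lemma TT_semi (M : ι → κ → ℝ) {a b : ℝ} (ha : 0 ≤ a) (hb : 0 ≤ b) {u : (ι → ℝ) → ℝ}
    (hu : Lip1 u) (m : ℝ) (y : ι → ℝ) :
    TT m (gam M a) (TT m (gam M b) u) y = TT m (gam M (a + b)) u y := by
  have hc := hu.continuous
  rw [TT_TT hu (gam_Good M b)]
  unfold TT
  split_ifs with h0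
  · rw [← gam_conv M ha hb, integral_map (by fun_prop) (by fun_prop),
      integral_prod _ (by simpa only [add_assoc] using int_prod hu (gam_Good M a) (gam_Good M b) y)]
    simp only [add_assoc]
  · rw [← gam_conv M ha hb, integral_map (by fun_prop) (by fun_prop),
      integral_prod _ (by simpa only [add_assoc] using int_exp_prod hu (gam_Good M a) (gam_Good M b) m y)]
    simp only [add_assoc]

lemma gam_scale (M : ι → κ → ℝ) {a b : ℝ} (ha : 0 ≤ a) :
    gam M (a * b) = (gam M b).map (fun x => Real.sqrt a • x) := by
  unfold gam
  rw [Measure.map_map (by fun_prop) (lin_meas M b)]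
  congr 1
  ext z σ
  simp [lin, Real.sqrt_mul ha, mul_assoc]

lemma TT_zero (M : ι → κ → ℝ) (u : (ι → ℝ) → ℝ) (hu : Lip1 u) (m : ℝ) (y : ι → ℝ) :
    TT m (gam M 0) u y = u y := by
  have hc := hu.continuous
  have e : ∀ z : κ → ℝ, lin M 0 z = 0 := fun z => by ext; simp [lin]
  unfold TT gam
  have hl := (lin_meas M 0).aemeasurable (μ := gP κ)
  split_ifs with h0
  · rw [integral_map hl (by fun_prop)]; simp [e]
  · rw [integral_map hl (by fun_prop)]; simp [e, h0]

lemma stdGauss_int : Integrable (fun z : ℝ => z) stdGauss := by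
  have := (memLp_id_gaussianReal (μ := 0) (v := 1) 1).integrable (by norm_num)
  exact this

lemma gP_int (k : κ) : Integrable (fun z : κ → ℝ => z k) (gP κ) :=
  integrable_comp_eval (μ := fun _ : κ => stdGauss) stdGauss_int

lemma gam_mean (M : ι → κ → ℝ) (s : ℝ) (p : ι → ℝ) :
    ∫ x, ∑ σ, p σ * x σ ∂(gam M s) = 0 := by
  unfold gam
  rw [integral_map (lin_meas M s).aemeasurable (Measurable.aestronglyMeasurable (by fun_prop))]
  have hk : ∀ k : κ, ∫ z : κ → ℝ, z k ∂(gP κ) = 0 := fun k => by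
    have h := integral_comp_eval (μ := fun _ : κ => stdGauss) (i := k) (f := fun z : ℝ => z)
      (by fun_prop)
    rw [gP, h, stdGauss, integral_id_gaussianReal]
  have hi : ∀ σ, Integrable (fun z : κ → ℝ => p σ * lin M s z σ) (gP κ) := fun σ => by
    unfold lin
    exact ((integrable_finsetSum _ fun k _ => (gP_int k).const_mul _).const_mul _).const_mul _
  rw [integral_finsetSum _ fun σ _ => hi σ]
  refine Finset.sum_eq_zero fun σ _ => ?_
  unfold lin
  rw [integral_const_mul, integral_const_mul, integral_finsetSum _ fun k _ => (gP_int k).const_mul _]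
  simp [integral_const_mul, hk]

lemma gam_var (M : ι → κ → ℝ) (p : ι → ℝ) :
    ∫ x, (∑ σ, p σ * x σ) ^ 2 ∂(gam M 1) = ∑ k, (∑ σ, p σ * M σ k) ^ 2 := by
  unfold gam
  have hl := lin_meas M 1
  rw [integral_map hl.aemeasurable (Measurable.aestronglyMeasurable (by fun_prop))]
  have hm := gam_mean M 1 p
  unfold gam at hm
  rw [integral_map hl.aemeasurable (Measurable.aestronglyMeasurable (by fun_prop))] at hm
  have e : ∀ z : κ → ℝ, ∑ σ, p σ * lin M 1 z σ = ∑ k, (∑ σ, p σ * M σ k) * z k := by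
    intro z
    simp only [lin, Real.sqrt_one, one_mul, Finset.mul_sum, Finset.sum_mul]
    rw [Finset.sum_comm]
    exact Finset.sum_congr rfl fun _ _ => Finset.sum_congr rfl fun _ _ => by ring
  simp only [e] at hm ⊢
  have hL : ∀ k : κ, MemLp (fun z : ℝ => (∑ σ, p σ * M σ k) * z) 2 stdGauss := fun k => by
    have := (memLp_id_gaussianReal (μ := 0) (v := 1) 2).const_mul (∑ σ, p σ * M σ k)
    exact this
  have hv := variance_sum_pi (μ := fun _ : κ => stdGauss)
    (X := fun k z => (∑ σ, p σ * M σ k) * z) hL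
  have e2 : (∑ i, fun ω : κ → ℝ => (∑ σ, p σ * M σ i) * ω i) = fun z => ∑ k, (∑ σ, p σ * M σ k) * z k := by
    ext z; simp
  rw [e2] at hv
  change Var[_; gP κ] = _ at hv
  rw [variance_of_integral_eq_zero (Measurable.aemeasurable (by fun_prop)) hm] at hv
  rw [hv]
  refine Finset.sum_congr rfl fun k _ => ?_
  rw [variance_const_mul, stdGauss]
  have := variance_id_gaussianReal (μ := 0) (v := 1)
  change _ * Var[id; _] = _
  rw [this]; simp

lemma gP_mgf (a : κ → ℝ) : ∫ z, Real.exp (∑ k, a k * z k) ∂(gP κ) = Real.exp ((∑ k, a k ^ 2) / 2) := by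
  have h := integral_fintype_prod_eq_prod (𝕜 := ℝ) (μ := fun _ : κ => stdGauss) (fun k z => Real.exp (a k * z))
  simp only [← Real.exp_sum] at h
  rw [gP, h]
  have e : ∀ k, ∫ z, Real.exp (a k * z) ∂stdGauss = Real.exp (a k ^ 2 / 2) := fun k => by
    have := congrFun (mgf_id_gaussianReal (μ := 0) (v := 1)) (a k)
    simpa [mgf, stdGauss] using this
  simp only [e, ← Real.exp_sum, Finset.sum_div]

lemma gam_phi [Nonempty ι] (M : ι → κ → ℝ) (d : ℝ) (hd : ∀ σ, ∑ k, M σ k ^ 2 = d) {ε : ℝ} (hε : 0 ≤ ε)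
    (y : ι → ℝ) : TT 1 (gam M ε) phi y = phi y + ε * d / 2 := by
  unfold TT phi
  rw [if_neg one_ne_zero]
  have e1 : ∀ x : ι → ℝ, Real.exp (1 * Real.log (∑ i, Real.exp ((y + x) i))) = ∑ i, Real.exp (y i) * Real.exp (x i) := by
    intro x
    rw [one_mul, Real.exp_log (sum_exp_pos _)]
    simp [Real.exp_add]
  simp only [e1]
  have hi : ∀ i, Integrable (fun x : ι → ℝ => Real.exp (y i) * Real.exp (x i)) (gam M ε) := fun i => by
    refine Integrable.const_mul ?_ _
    refine ((gam_Good M ε).exp 1).mono' (Measurable.aestronglyMeasurable (by fun_prop)) (Eventually.of_forall fun x => ?_)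
    rw [Real.norm_eq_abs, abs_of_pos (Real.exp_pos _), one_mul]
    exact Real.exp_le_exp.2 ((le_abs_self _).trans (norm_le_pi_norm x i))
  rw [integral_finsetSum _ fun i _ => hi i]
  have e2 : ∀ i, ∫ x, Real.exp (y i) * Real.exp (x i) ∂(gam M ε) = Real.exp (ε * d / 2) * Real.exp (y i) := by
    intro i
    rw [integral_const_mul]
    unfold gam
    rw [integral_map (lin_meas M ε).aemeasurable (Measurable.aestronglyMeasurable (by fun_prop))]
    have e3 : ∀ z : κ → ℝ, lin M ε z i = ∑ k, (Real.sqrt ε * M i k) * z k := fun z => by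
      simp only [lin, Finset.mul_sum, mul_assoc]
    simp only [e3, gP_mgf, mul_pow, Real.sq_sqrt hε, ← Finset.mul_sum, hd]
    ring
  simp only [e2, ← Finset.mul_sum]
  rw [Real.log_mul (Real.exp_ne_zero _) (sum_exp_pos _).ne', Real.log_exp]
  ring

lemma gaussC_eq (N : ℕ) : gaussC N = (gP (Fin N × Fin N)).map (MeasurableEquiv.curry (Fin N) (Fin N) ℝ) := by
  have h := Measure.infinitePi_map_curry (fun (_ : Fin N) (_ : Fin N) => stdGauss)
  simp only [Measure.infinitePi_eq_pi] at h
  exact h.symm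

end GaussFacts

section LemmaS

variable {ι κ : Type*} [Fintype ι] [Fintype κ]

lemma gam_var' (M : ι → κ → ℝ) {b : ℝ} (hb : 0 ≤ b) (p : ι → ℝ) :
    ∫ x, (∑ σ, p σ * x σ) ^ 2 ∂(gam M b) = b * ∑ k, (∑ σ, p σ * M σ k) ^ 2 := by
  have h := gam_scale M (a := b) (b := 1) hb
  rw [mul_one] at h
  rw [h, integral_map (by fun_prop) (Measurable.aestronglyMeasurable (by fun_prop)), ← gam_var,
    ← integral_const_mul]
  congr 1
  ext x
  have : ∑ σ, p σ * (Real.sqrt b • x) σ = Real.sqrt b * ∑ σ, p σ * x σ := by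
    rw [Finset.mul_sum]
    exact Finset.sum_congr rfl fun _ _ => by simp; ring
  rw [this, mul_pow, Real.sq_sqrt hb]

lemma TT_shift {μ : Measure (ι → ℝ)} (hμ : Good μ) {v : (ι → ℝ) → ℝ} (hv : Lip1 v)
    (m : ℝ) (y : ι → ℝ) :
    TT m μ v y = v y + if m = 0 then ∫ x, (v (y + x) - v y) ∂μ
      else m⁻¹ * Real.log (∫ x, Real.exp (m * (v (y + x) - v y)) ∂μ) := by
  have := hμ.prob
  unfold TT
  split_ifs with h0
  · rw [integral_sub (hv.int hμ y) (integrable_const _)]; simp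
  · have e : ∀ x, Real.exp (m * (v (y + x) - v y)) = Real.exp (-(m * v y)) * Real.exp (m * v (y + x)) := by
      intro x; rw [← Real.exp_add]; congr 1; ring
    simp only [e]
    rw [integral_const_mul, Real.log_mul (Real.exp_ne_zero _) (hv.exp_pos hμ m y).ne', Real.log_exp]
    field_simp
    ring

lemma expTT (M : ι → κ → ℝ) {b : ℝ} (hb : 0 ≤ b) (L : ℝ) (hL : 1 ≤ L) :
    ∃ C : ℝ, 0 ≤ C ∧ ∀ (ε : ℝ) (u v : (ι → ℝ) → ℝ) (p : (ι → ℝ) → (ι → ℝ)), 0 ≤ ε → ε ≤ 1 →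
      Reg L u p → Lip1 v → (∀ y, |v y - u y| ≤ L * ε) → ∀ y, ∃ E : ℝ, |E| ≤ C * ε ∧
      b * ∑ k, (∑ σ, p y σ * M σ k) ^ 2 ≤ C ∧ ∀ m : ℝ, 0 ≤ m → m ≤ 1 →
      |TT m (gam M (ε * b)) v y - v y - E - m / 2 * ε * (b * ∑ k, (∑ σ, p y σ * M σ k) ^ 2)|
        ≤ C * (ε * Real.sqrt ε) := by
  obtain ⟨C, hC, H⟩ := expansion (gam M b) (fun x => ‖x‖) (by fun_prop) (fun x => norm_nonneg _)
    (gam_Good M b).exp (3 * L) (by linarith)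
  refine ⟨C, hC, ?_⟩
  intro ε u v p hε hε1 hu hv huv y
  have hvc := hv.continuous
  have hδ := Real.sqrt_nonneg ε
  have hδ1 : Real.sqrt ε ≤ 1 := Real.sqrt_le_one.2 hε1
  have hδ2 : Real.sqrt ε ^ 2 = ε := Real.sq_sqrt hε
  have hδ3 : Real.sqrt ε ^ 3 = ε * Real.sqrt ε := by rw [pow_succ, hδ2]
  have hns : ∀ x : ι → ℝ, ‖Real.sqrt ε • x‖ = Real.sqrt ε * ‖x‖ := fun x => by
    rw [norm_smul, Real.norm_eq_abs, abs_of_nonneg hδ]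
  obtain ⟨h1, h2, h3⟩ := H (Real.sqrt ε) (fun x => v (y + Real.sqrt ε • x) - v y)
    (fun x => ∑ σ, p y σ * x σ) hδ hδ1 (by fun_prop) (by fun_prop)
    (fun x => simplex_abs (hu.nonneg y) (hu.sum y) x) (gam_mean M b (p y))
    (fun x => by rw [← hns]; exact hv y _)
    (fun x => by
      have q := hu.quad y (Real.sqrt ε • x)
      have e : ∑ σ, p y σ * (Real.sqrt ε • x) σ = Real.sqrt ε * ∑ σ, p y σ * x σ := by
        rw [Finset.mul_sum]
        exact Finset.sum_congr rfl fun _ _ => by simp; ring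
      rw [e, hns, mul_pow, hδ2] at q
      rw [hδ2]
      have a1 := abs_le.1 (huv y)
      have a2 := abs_le.1 (huv (y + Real.sqrt ε • x))
      have a3 := abs_le.1 q
      have hn := norm_nonneg x
      have hLe : 0 ≤ L * ε := by positivity
      have f1 : 0 ≤ (L * ε) * ‖x‖ := by positivity
      have f2 : 0 ≤ (L * ε) * ‖x‖ ^ 2 := by positivity
      rw [abs_le]
      constructor <;> nlinarith [a1.1, a1.2, a2.1, a2.2, a3.1, a3.2])
  rw [gam_var' M hb] at h2 h3
  rw [hδ2] at h1 h3
  rw [hδ3] at h3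
  refine ⟨_, h1, h2, ?_⟩
  intro m hm hm1
  rw [TT_shift (gam_Good M _) hv, gam_scale M hε]
  have hms : ∀ f : (ι → ℝ) → ℝ, Measurable f → ∫ x, f x ∂((gam M b).map fun x => Real.sqrt ε • x) =
      ∫ x, f (Real.sqrt ε • x) ∂(gam M b) := fun f hf =>
    integral_map (by fun_prop) hf.aestronglyMeasurable
  rw [hms _ (by fun_prop), hms _ (by fun_prop)]
  split_ifs with h0
  · subst h0
    simp only [zero_div, zero_mul, sub_zero, add_sub_cancel_left, sub_self, abs_zero]
    positivity
  · rw [add_sub_cancel_left]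
    exact h3 m (lt_of_le_of_ne hm (Ne.symm h0)) hm1

lemma TT_near (M : ι → κ → ℝ) {b : ℝ} (hb : 0 ≤ b) (L : ℝ) (hL : 1 ≤ L) :
    ∃ C : ℝ, 0 ≤ C ∧ ∀ (ε : ℝ) (u : (ι → ℝ) → ℝ) (p : (ι → ℝ) → (ι → ℝ)), 0 ≤ ε → ε ≤ 1 →
      Reg L u p → ∀ (m : ℝ) (y : ι → ℝ), 0 ≤ m → m ≤ 1 →
      |TT m (gam M (ε * b)) u y - u y| ≤ C * ε := by
  obtain ⟨C, hC, H⟩ := expTT M hb L hL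
  refine ⟨3 * C, by positivity, ?_⟩
  intro ε u p hε hε1 hu m y hm hm1
  obtain ⟨E, h1, h2, h3⟩ := H ε u u p hε hε1 hu hu.lip (fun y => by simp; positivity) y
  have h4 := abs_le.1 (h3 m hm hm1)
  have h1 := abs_le.1 h1
  set V := b * ∑ k, (∑ σ, p y σ * M σ k) ^ 2 with hV
  have V0 : 0 ≤ V := mul_nonneg hb (Finset.sum_nonneg fun _ _ => sq_nonneg _)
  have h5 : m / 2 * ε * V ≤ C * ε := by
    have : m / 2 * V ≤ 1 * C := mul_le_mul (by linarith) h2 V0 (by norm_num)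
    nlinarith
  have h50 : 0 ≤ m / 2 * ε * V := by positivity
  have h6 : C * (ε * Real.sqrt ε) ≤ C * ε :=
    mul_le_mul_of_nonneg_left (mul_le_of_le_one_right hε (Real.sqrt_le_one.2 hε1)) hC
  have h7 : 0 ≤ C * ε := by positivity
  rw [abs_le]
  constructor <;> linarith [h4.1, h4.2, h1.1, h1.2]

lemma lemmaS {κ' : Type*} [Fintype κ'] (MA : ι → κ → ℝ) (MQ : ι → κ' → ℝ) {b : ℝ} (hb : 0 ≤ b) (c : ℝ)
    (hV : ∀ p : ι → ℝ, (∀ i, 0 ≤ p i) → ∑ i, p i = 1 →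
      b * ∑ k, (∑ σ, p σ * MQ σ k) ^ 2 - c ≤ ∑ k, (∑ σ, p σ * MA σ k) ^ 2)
    (L : ℝ) (hL : 1 ≤ L) :
    ∃ C : ℝ, 0 ≤ C ∧ ∀ (ε : ℝ) (u v : (ι → ℝ) → ℝ) (p : (ι → ℝ) → (ι → ℝ)), 0 ≤ ε → ε ≤ 1 →
      Reg L u p → Lip1 v → (∀ y, |v y - u y| ≤ L * ε) → ∀ (m' m : ℝ) (y : ι → ℝ), 0 ≤ m' → m' ≤ m →
      m ≤ 1 → TT m' (gam MA ε) u y - TT m' (gam MQ (ε * b)) v y ≤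
        TT m (gam MA ε) u y - TT m (gam MQ (ε * b)) v y + (m - m') / 2 * c * ε
          + C * (ε * Real.sqrt ε) := by
  obtain ⟨C1, hC1, H1⟩ := expTT MA zero_le_one L hL
  obtain ⟨C2, hC2, H2⟩ := expTT MQ hb L hL
  refine ⟨2 * C1 + 2 * C2, by positivity, ?_⟩
  intro ε u v p hε hε1 hu hv huv m' m y hm' hmm hm
  obtain ⟨E1, -, -, h1⟩ := H1 ε u u p hε hε1 hu hu.lip (fun y => by simp; positivity) y
  obtain ⟨E2, -, -, h2⟩ := H2 ε u v p hε hε1 hu hv huv y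
  have hVy := hV (p y) (hu.nonneg y) (hu.sum y)
  rw [mul_one, one_mul] at h1
  have a1 := abs_le.1 (h1 m (hm'.trans hmm) hm)
  have a2 := abs_le.1 (h1 m' hm' (hmm.trans hm))
  have a3 := abs_le.1 (h2 m (hm'.trans hmm) hm)
  have a4 := abs_le.1 (h2 m' hm' (hmm.trans hm))
  set VA := ∑ k, (∑ σ, p y σ * MA σ k) ^ 2
  set VQ := b * ∑ k, (∑ σ, p y σ * MQ σ k) ^ 2
  have h5 : 0 ≤ (m - m') / 2 * ε * (VA - (VQ - c)) := by
    have : 0 ≤ m - m' := by linarith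
    have : 0 ≤ VA - (VQ - c) := by linarith
    positivity
  nlinarith [a1.1, a1.2, a2.1, a2.2, a3.1, a3.2, a4.1, a4.2]

end LemmaS

section Levels

lemma OrderParam.m_step (X : OrderParam) {a : ℕ} (ha : a ≤ X.K) : X.m a ≤ X.m (a + 1) := by
  rcases Nat.eq_zero_or_pos a with h | h
  · subst h; rw [X.hm0]; exact X.hm1
  · rcases Nat.lt_or_ge a X.K with h' | h'
    · exact X.hm_mono a h h'
    · have : a = X.K := le_antisymm ha h'
      subst this; rw [X.hmtop]; exact X.hmK

lemma OrderParam.m_nonneg (X : OrderParam) {a : ℕ} (ha : a ≤ X.K + 1) : 0 ≤ X.m a := by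
  induction a with
  | zero => rw [X.hm0]
  | succ a ih => exact (ih (by omega)).trans (X.m_step (by omega))

lemma OrderParam.m_le_one (X : OrderParam) {a : ℕ} (ha : a ≤ X.K + 1) : X.m a ≤ 1 := by
  have h : ∀ j, j ≤ X.K + 1 → X.m (X.K + 1 - j) ≤ 1 := by
    intro j
    induction j with
    | zero => intro _; rw [Nat.sub_zero, X.hmtop]
    | succ j ih =>
      intro hj
      refine le_trans ?_ (ih (by omega))
      have := X.m_step (a := X.K + 1 - (j + 1)) (by omega)
      rwa [show X.K + 1 - (j + 1) + 1 = X.K + 1 - j by omega] at this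
  have := h (X.K + 1 - a) (by omega)
  rwa [show X.K + 1 - (X.K + 1 - a) = a by omega] at this

lemma OrderParam.q_nonneg (X : OrderParam) {a : ℕ} (ha : a ≤ X.K) : 0 ≤ X.q a := by
  induction a with
  | zero => rw [X.hq0]
  | succ a ih => exact (ih (by omega)).trans (X.hq_mono a (by omega))

lemma OrderParam.gap (X : OrderParam) {j : ℕ} (hj : j < X.K) :
    0 ≤ X.q (X.K - j) - X.q (X.K - j - 1) := by
  have := X.hq_mono (X.K - j - 1) (by omega)
  rw [show X.K - j - 1 + 1 = X.K - j by omega] at this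
  linarith

variable {ι κ κ' : Type*} [Fintype ι] [Nonempty ι] [Fintype κ] [Fintype κ']

lemma Reg.mono {L L' : ℝ} {u : (ι → ℝ) → ℝ} {p : (ι → ℝ) → (ι → ℝ)} (h : Reg L u p) (hL : L ≤ L') :
    Reg L' u p :=
  ⟨h.meas, h.nonneg, h.sum, h.lip, fun y x =>
    (h.quad y x).trans (mul_le_mul_of_nonneg_right hL (sq_nonneg _))⟩

/-- The level functions of the Parisi recursion for the full system. -/
def UU (X : OrderParam) (MS : ι → κ → ℝ) : ℕ → ℝ → (ι → ℝ) → ℝ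
  | 0, _ => phi
  | j + 1, s => TT (X.m (X.K - j)) (gam MS (s * (X.q (X.K - j) - X.q (X.K - j - 1)))) (UU X MS j s)

lemma UU_Reg (X : OrderParam) (MS : ι → κ → ℝ) (j : ℕ) (s : ℝ) :
    ∃ p, Reg (2 + 2 * j) (UU X MS j s) p := by
  induction j with
  | zero => exact ⟨_, by simpa [UU] using phi_Reg (ι := ι)⟩
  | succ j ih =>
    obtain ⟨p, hp⟩ := ih
    refine ⟨_, (TT_Reg hp (gam_Good MS _) (X.m_nonneg (by omega)) (X.m_le_one (by omega))).mono ?_⟩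
    push_cast; linarith

lemma UU_Lip1 (X : OrderParam) (MS : ι → κ → ℝ) (j : ℕ) (s : ℝ) : Lip1 (UU X MS j s) := by
  obtain ⟨p, hp⟩ := UU_Reg X MS j s
  exact hp.lip

lemma UU_close (X : OrderParam) (MS : ι → κ → ℝ) (j : ℕ) (hj : j ≤ X.K) :
    ∃ C : ℝ, 0 ≤ C ∧ ∀ (ε s : ℝ) (y : ι → ℝ), 0 ≤ ε → ε ≤ 1 → 0 ≤ s →
      |UU X MS j (s + ε) y - UU X MS j s y| ≤ C * ε := by
  induction j with
  | zero => exact ⟨0, le_rfl, fun ε s y _ _ _ => by simp [UU]⟩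
  | succ j ih =>
    obtain ⟨C, hC, H⟩ := ih (by omega)
    have hgap := X.gap (j := j) (by omega)
    have hm0 := X.m_nonneg (a := X.K - j) (by omega)
    have hm1 := X.m_le_one (a := X.K - j) (by omega)
    obtain ⟨C2, hC2, H2⟩ := TT_near MS hgap (2 + 2 * (j + 1 : ℕ)) (by push_cast; linarith [(Nat.cast_nonneg j : (0:ℝ) ≤ j)])
    refine ⟨C + C2, by positivity, ?_⟩
    intro ε s y hε hε1 hs
    set Δ := X.q (X.K - j) - X.q (X.K - j - 1) with hΔ
    have hmid : TT (X.m (X.K - j)) (gam MS ((s + ε) * Δ)) (UU X MS j s) y =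
        TT (X.m (X.K - j)) (gam MS (ε * Δ)) (UU X MS (j + 1) s) y := by
      have e : (s + ε) * Δ = ε * Δ + s * Δ := by ring
      rw [e, ← TT_semi MS (mul_nonneg hε hgap) (mul_nonneg hs hgap) (UU_Lip1 X MS j s)]
      rfl
    obtain ⟨p, hp⟩ := UU_Reg X MS (j + 1) s
    have h2 := abs_le.1 (H2 ε _ p hε hε1 hp (X.m (X.K - j)) y hm0 hm1)
    have h3 := TT_mono (UU_Lip1 X MS j (s + ε)) (UU_Lip1 X MS j s) (gam_Good MS ((s + ε) * Δ)) hm0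
      (c := C * ε) (fun y => by have := abs_le.1 (H ε s y hε hε1 hs); linarith [this.2]) y
    have h4 := TT_mono (UU_Lip1 X MS j s) (UU_Lip1 X MS j (s + ε)) (gam_Good MS ((s + ε) * Δ)) hm0
      (c := C * ε) (fun y => by have := abs_le.1 (H ε s y hε hε1 hs); linarith [this.1]) y
    rw [hmid] at h3 h4
    have e : UU X MS (j + 1) (s + ε) y =
      TT (X.m (X.K - j)) (gam MS ((s + ε) * Δ)) (UU X MS j (s + ε)) y := rfl
    rw [e, abs_le]
    constructor <;> linarith [h2.1, h2.2]

/-- The accumulated constants. -/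
def cc (X : OrderParam) (d : ℝ) (c : ℕ → ℝ) (j : ℕ) : ℝ :=
  d + ∑ i ∈ Finset.range (j + 1), (X.m (X.K - i + 1) - X.m (X.K - i)) / 2 * c (X.K - i)

lemma level_claim (X : OrderParam) (MS : ι → κ → ℝ) (MA : ι → κ' → ℝ) (dA dS : ℝ)
    (hdA : ∀ σ, ∑ k, MA σ k ^ 2 = dA) (hdS : ∀ σ, ∑ k, MS σ k ^ 2 = dS) (c : ℕ → ℝ)
    (hV : ∀ b ≤ X.K, ∀ p : ι → ℝ, (∀ i, 0 ≤ p i) → ∑ i, p i = 1 →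
      X.q b * ∑ k, (∑ σ, p σ * MS σ k) ^ 2 - c b ≤ ∑ k, (∑ σ, p σ * MA σ k) ^ 2)
    (j : ℕ) (hj : j ≤ X.K) :
    ∃ C : ℝ, 0 ≤ C ∧ ∀ (ε s : ℝ) (y : ι → ℝ), 0 ≤ ε → ε ≤ 1 → 0 ≤ s →
      TT (X.m (X.K - j)) (gam MA ε) (UU X MS j s) y ≤
        TT (X.m (X.K - j)) (gam MS (ε * X.q (X.K - j))) (UU X MS j (s + ε)) y
          + cc X ((dA - dS) / 2) c j * ε + C * (ε * Real.sqrt ε) := by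
  have gen : ∀ j, j ≤ X.K → ∃ C : ℝ, 0 ≤ C ∧ ∀ (ε s : ℝ) (y : ι → ℝ) (D : ℝ), 0 ≤ ε → ε ≤ 1 → 0 ≤ s →
      TT (X.m (X.K - j + 1)) (gam MA ε) (UU X MS j s) y ≤
        TT (X.m (X.K - j + 1)) (gam MS (ε * X.q (X.K - j))) (UU X MS j (s + ε)) y + D →
      TT (X.m (X.K - j)) (gam MA ε) (UU X MS j s) y ≤
        TT (X.m (X.K - j)) (gam MS (ε * X.q (X.K - j))) (UU X MS j (s + ε)) y
          + D + (X.m (X.K - j + 1) - X.m (X.K - j)) / 2 * c (X.K - j) * ε + C * (ε * Real.sqrt ε) := by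
    intro j hj
    obtain ⟨C1, hC1, H1⟩ := UU_close X MS j hj
    have hj0 : (0:ℝ) ≤ j := Nat.cast_nonneg j
    obtain ⟨C, hC, H⟩ := lemmaS MA MS (X.q_nonneg (a := X.K - j) (by omega)) (c (X.K - j))
      (hV _ (by omega)) (2 + 2 * j + C1) (by linarith)
    refine ⟨C, hC, ?_⟩
    intro ε s y D hε hε1 hs hD
    obtain ⟨p, hp⟩ := UU_Reg X MS j s
    have := H ε (UU X MS j s) (UU X MS j (s + ε)) p hε hε1 (hp.mono (by linarith))
      (UU_Lip1 X MS j (s + ε)) (fun y => (H1 ε s y hε hε1 hs).trans (by nlinarith))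
      (X.m (X.K - j)) (X.m (X.K - j + 1)) y (X.m_nonneg (by omega)) (X.m_step (by omega))
      (X.m_le_one (by omega))
    linarith
  induction j with
  | zero =>
    obtain ⟨C, hC, H⟩ := gen 0 hj
    refine ⟨C, hC, ?_⟩
    intro ε s y hε hε1 hs
    have := H ε s y ((dA - dS) / 2 * ε) hε hε1 hs (by
      rw [Nat.sub_zero, X.hmtop, X.hqK, mul_one]
      change TT 1 (gam MA ε) phi y ≤ TT 1 (gam MS ε) phi y + _
      rw [gam_phi MA dA hdA hε, gam_phi MS dS hdS hε]
      linarith)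
    have e : cc X ((dA - dS) / 2) c 0 * ε = (dA - dS) / 2 * ε +
      (X.m (X.K - 0 + 1) - X.m (X.K - 0)) / 2 * c (X.K - 0) * ε := by simp [cc]; ring
    rw [e]
    linarith
  | succ j ih =>
    obtain ⟨C1, hC1, H1⟩ := ih (by omega)
    obtain ⟨C, hC, H⟩ := gen (j + 1) hj
    refine ⟨C1 + C, by positivity, ?_⟩
    intro ε s y hε hε1 hs
    have hgap := X.gap (j := j) (by omega)
    have hm0 := X.m_nonneg (a := X.K - j) (by omega)
    set Δ := X.q (X.K - j) - X.q (X.K - j - 1) with hΔ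
    have i1 : X.K - (j + 1) + 1 = X.K - j := by omega
    have i2 : X.K - (j + 1) = X.K - j - 1 := by omega
    have hq := X.q_nonneg (a := X.K - j) (by omega)
    have hq' := X.q_nonneg (a := X.K - j - 1) (by omega)
    have step := TT_mono (TT_Lip1 (UU_Lip1 X MS j s) (gam_Good MA ε) hm0)
      (TT_Lip1 (UU_Lip1 X MS j (s + ε)) (gam_Good MS (ε * X.q (X.K - j))) hm0)
      (gam_Good MS (s * Δ)) hm0 (c := cc X ((dA - dS) / 2) c j * ε + C1 * (ε * Real.sqrt ε))
      (fun y => by have := H1 ε s y hε hε1 hs; linarith) y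
    rw [TT_comm (UU_Lip1 X MS j s) (gam_Good MS _) (gam_Good MA _),
      TT_semi MS (mul_nonneg hs hgap) (mul_nonneg hε hq) (UU_Lip1 X MS j (s + ε)),
      show s * Δ + ε * X.q (X.K - j) = ε * X.q (X.K - j - 1) + (s + ε) * Δ by rw [hΔ]; ring,
      ← TT_semi MS (mul_nonneg hε hq') (mul_nonneg (by linarith) hgap) (UU_Lip1 X MS j (s + ε))] at step
    have := H ε s y (cc X ((dA - dS) / 2) c j * ε + C1 * (ε * Real.sqrt ε)) hε hε1 hs (by
      rw [i1, i2]; exact step)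
    have e : cc X ((dA - dS) / 2) c (j + 1) * ε = cc X ((dA - dS) / 2) c j * ε +
      (X.m (X.K - (j + 1) + 1) - X.m (X.K - (j + 1))) / 2 * c (X.K - (j + 1)) * ε := by
      unfold cc
      rw [Finset.sum_range_succ _ (j + 1)]; ring
    rw [e]
    linarith

lemma UU_zero (X : OrderParam) (MS : ι → κ → ℝ) (j : ℕ) (y : ι → ℝ) : UU X MS j 0 y = phi y := by
  induction j generalizing y with
  | zero => rfl
  | succ j ih =>
    have e : UU X MS j 0 = phi := funext ih
    unfold UU
    rw [zero_mul, TT_zero MS _ (UU_Lip1 X MS j 0), e]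

lemma abstract_bound (X : OrderParam) (MS : ι → κ → ℝ) (MA : ι → κ' → ℝ) (dA dS : ℝ)
    (hdA : ∀ σ, ∑ k, MA σ k ^ 2 = dA) (hdS : ∀ σ, ∑ k, MS σ k ^ 2 = dS) (c : ℕ → ℝ)
    (hV : ∀ b ≤ X.K, ∀ p : ι → ℝ, (∀ i, 0 ≤ p i) → ∑ i, p i = 1 →
      X.q b * ∑ k, (∑ σ, p σ * MS σ k) ^ 2 - c b ≤ ∑ k, (∑ σ, p σ * MA σ k) ^ 2) (y : ι → ℝ) :
    TT 0 (gam MA 1) phi y ≤ UU X MS X.K 1 y + cc X ((dA - dS) / 2) c X.K := by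
  obtain ⟨C, hC, H⟩ := level_claim X MS MA dA dS hdA hdS c hV X.K le_rfl
  set d := cc X ((dA - dS) / 2) c X.K with hd
  simp only [Nat.sub_self, X.hm0, X.hq0, mul_zero] at H
  have iter : ∀ (ε : ℝ), 0 ≤ ε → ε ≤ 1 → ∀ (k : ℕ) (y : ι → ℝ), TT 0 (gam MA (k * ε)) phi y ≤
      UU X MS X.K (k * ε) y + k * (d * ε + C * (ε * Real.sqrt ε)) := by
    intro ε hε hε1 k
    induction k with
    | zero => intro y; simp [TT_zero MA _ phi_Lip1, UU_zero]
    | succ k ih =>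
      intro y
      have hk : (0:ℝ) ≤ k * ε := by positivity
      have e : ((k + 1 : ℕ) : ℝ) * ε = ε + k * ε := by push_cast; ring
      have e' : ε + k * ε = k * ε + ε := by ring
      rw [e, ← TT_semi MA hε hk phi_Lip1]
      have h1 := TT_mono (TT_Lip1 phi_Lip1 (gam_Good MA (k * ε)) le_rfl) (UU_Lip1 X MS X.K (k * ε))
        (gam_Good MA ε) le_rfl ih y
      have h2 := H ε (k * ε) y hε hε1 hk
      rw [TT_zero MS _ (UU_Lip1 X MS X.K _)] at h2
      rw [e']
      push_cast
      linarith
  have hn : ∀ n : ℕ, TT 0 (gam MA 1) phi y ≤ UU X MS X.K 1 y + (d + C * Real.sqrt (1 / ((n:ℝ) + 1))) := by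
    intro n
    have hp : (0:ℝ) < (n:ℝ) + 1 := by positivity
    have := iter (1 / ((n:ℝ) + 1)) (by positivity) (by rw [div_le_one hp]; linarith [(Nat.cast_nonneg n : (0:ℝ) ≤ n)]) (n + 1) y
    have e1 : ((n + 1 : ℕ) : ℝ) * (1 / ((n:ℝ) + 1)) = 1 := by push_cast; field_simp
    rw [e1] at this
    refine this.trans (le_of_eq ?_)
    have : ∀ r : ℝ, ((n + 1 : ℕ) : ℝ) * (d * (1 / ((n:ℝ) + 1)) + C * (1 / ((n:ℝ) + 1) * r)) = d + C * r := by
      intro r; push_cast; field_simp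
    rw [this]
  have hlim : Tendsto (fun n : ℕ => UU X MS X.K 1 y + (d + C * Real.sqrt (1 / ((n:ℝ) + 1)))) atTop
      (nhds (UU X MS X.K 1 y + (d + C * Real.sqrt 0))) := by
    have := (Real.continuous_sqrt.tendsto 0).comp (tendsto_one_div_add_atTop_nhds_zero_nat (𝕜 := ℝ))
    exact ((this.const_mul C).const_add d).const_add _
  have := ge_of_tendsto' hlim hn
  simpa using this

end Levels

section Concrete

/-- One-body Gaussian field matrix. -/
def MSc (N : ℕ) (β : ℝ) (σ : Fin N → Bool) (i : Fin N) : ℝ := β * spin (σ i)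

/-- Two-body Gaussian field matrix. -/
def MAc (N : ℕ) (β : ℝ) (σ : Fin N → Bool) (k : Fin N × Fin N) : ℝ :=
  if k.1 < k.2 then β / Real.sqrt N * (spin (σ k.1) * spin (σ k.2)) else 0

lemma spin_sq (b : Bool) : spin b ^ 2 = 1 := by cases b <;> simp [spin]

lemma spin_mul_self (b : Bool) : spin b * spin b = 1 := by cases b <;> simp [spin]

lemma sum_lt {N : ℕ} (f : Fin N → Fin N → ℝ) (hf : ∀ i j, f i j = f j i) :
    ∑ k : Fin N × Fin N, (if k.1 < k.2 then f k.1 k.2 else 0) =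
      (∑ i, ∑ j, f i j - ∑ i, f i i) / 2 := by
  rw [Fintype.sum_prod_type]
  have h1 : ∀ i j : Fin N, f i j = (if i < j then f i j else 0) + (if j < i then f i j else 0) +
      (if i = j then f i j else 0) := by
    intro i j
    rcases lt_trichotomy i j with h | h | h
    · simp [h, h.ne, h.not_gt]
    · simp [h]
    · simp [h, h.ne', h.not_gt]
  have h2 : ∑ i, ∑ j, f i j = ∑ i, ∑ j, (if i < j then f i j else 0) +
      ∑ i, ∑ j, (if j < i then f i j else 0) + ∑ i, ∑ j, (if i = j then f i j else 0) := by
    rw [← Finset.sum_add_distrib, ← Finset.sum_add_distrib]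
    refine Finset.sum_congr rfl fun i _ => ?_
    rw [← Finset.sum_add_distrib, ← Finset.sum_add_distrib]
    exact Finset.sum_congr rfl fun j _ => h1 i j
  have h3 : ∑ i, ∑ j, (if j < i then f i j else 0) = ∑ i, ∑ j, (if i < j then f i j else 0) := by
    rw [Finset.sum_comm]
    exact Finset.sum_congr rfl fun i _ => Finset.sum_congr rfl fun j _ => by rw [hf j i]
  have h4 : ∑ i, ∑ j, (if i = j then f i j else 0) = ∑ i, f i i := by simp
  rw [h2, h3, h4]
  ring

lemma MSc_diag (N : ℕ) (β : ℝ) (σ : Fin N → Bool) : ∑ k, MSc N β σ k ^ 2 = N * β ^ 2 := by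
  simp [MSc, mul_pow, spin_sq]

lemma MAc_diag (N : ℕ) (hN : 1 ≤ N) (β : ℝ) (σ : Fin N → Bool) :
    ∑ k, MAc N β σ k ^ 2 = β ^ 2 * (N - 1) / 2 := by
  have hN' : (0:ℝ) < N := by exact_mod_cast hN
  have e : ∀ k : Fin N × Fin N, MAc N β σ k ^ 2 =
      if k.1 < k.2 then (fun _ _ : Fin N => β ^ 2 / N) k.1 k.2 else 0 := by
    intro k
    unfold MAc
    split_ifs
    · simp [mul_pow, spin_sq, div_pow]
    · simp
  rw [Finset.sum_congr rfl fun k _ => e k, sum_lt (fun _ _ : Fin N => β ^ 2 / N) (fun _ _ => rfl)]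
  simp
  field_simp

lemma quad_expand {ι κ : Type*} [Fintype ι] [Fintype κ] (p : ι → ℝ) (a : ι → κ → ℝ) :
    ∑ k, (∑ σ, p σ * a σ k) ^ 2 = ∑ σ, ∑ τ, p σ * p τ * ∑ k, a σ k * a τ k := by
  simp only [sq]
  simp_rw [Finset.sum_mul_sum]
  simp only [Finset.mul_sum]
  rw [Finset.sum_comm]
  refine Finset.sum_congr rfl fun σ _ => ?_
  rw [Finset.sum_comm]
  exact Finset.sum_congr rfl fun τ _ => Finset.sum_congr rfl fun k _ => by ring

lemma MAc_var (N : ℕ) (β : ℝ) (p : (Fin N → Bool) → ℝ) (hp : ∑ σ, p σ = 1) :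
    ∑ k, (∑ σ, p σ * MAc N β σ k) ^ 2 =
      β ^ 2 / N * ((∑ k : Fin N × Fin N, (∑ σ, p σ * (spin (σ k.1) * spin (σ k.2))) ^ 2 - N) / 2) := by
  have e : ∀ k : Fin N × Fin N, (∑ σ, p σ * MAc N β σ k) ^ 2 = β ^ 2 / N *
      if k.1 < k.2 then (fun i j : Fin N => (∑ σ, p σ * (spin (σ i) * spin (σ j))) ^ 2) k.1 k.2 else 0 := by
    intro k
    unfold MAc
    split_ifs
    · have : ∑ σ, p σ * (β / Real.sqrt N * (spin (σ k.1) * spin (σ k.2))) =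
        β / Real.sqrt N * ∑ σ, p σ * (spin (σ k.1) * spin (σ k.2)) := by
        rw [Finset.mul_sum]; exact Finset.sum_congr rfl fun _ _ => by ring
      rw [this]
      simp [mul_pow, div_pow]
    · simp
  have hs := sum_lt (fun i j : Fin N => (∑ σ, p σ * (spin (σ i) * spin (σ j))) ^ 2)
    (fun i j => by
      have : ∀ σ : Fin N → Bool, spin (σ i) * spin (σ j) = spin (σ j) * spin (σ i) :=
        fun σ => mul_comm _ _
      simp only [this])
  rw [Finset.sum_congr rfl fun k _ => e k, ← Finset.mul_sum, hs]
  simp only [spin_mul_self, mul_one, hp]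
  rw [Fintype.sum_prod_type]
  simp

lemma concrete_var (N : ℕ) (hN : 1 ≤ N) (β q : ℝ) (p : (Fin N → Bool) → ℝ) (hp0 : ∀ σ, 0 ≤ p σ)
    (hp : ∑ σ, p σ = 1) :
    q * ∑ k, (∑ σ, p σ * MSc N β σ k) ^ 2 - β ^ 2 / 2 * (N * q ^ 2 + 1) ≤
      ∑ k, (∑ σ, p σ * MAc N β σ k) ^ 2 := by
  have hN' : (0:ℝ) < N := by exact_mod_cast hN
  rw [MAc_var N β p hp, quad_expand, quad_expand]
  set R : (Fin N → Bool) → (Fin N → Bool) → ℝ := fun σ τ => ∑ i, spin (σ i) * spin (τ i) with hR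
  have e1 : ∀ σ τ, ∑ k, MSc N β σ k * MSc N β τ k = β ^ 2 * R σ τ := by
    intro σ τ
    simp only [hR, MSc, Finset.mul_sum]
    exact Finset.sum_congr rfl fun _ _ => by ring
  have e2 : ∀ σ τ : Fin N → Bool, ∑ k : Fin N × Fin N,
      (spin (σ k.1) * spin (σ k.2)) * (spin (τ k.1) * spin (τ k.2)) = R σ τ ^ 2 := by
    intro σ τ
    rw [Fintype.sum_prod_type, sq, hR, Finset.sum_mul_sum]
    exact Finset.sum_congr rfl fun _ _ => Finset.sum_congr rfl fun _ _ => by ring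
  simp only [e1, e2]
  have e3 : ∑ σ, ∑ τ, p σ * p τ * (β ^ 2 * R σ τ) = β ^ 2 * ∑ σ, ∑ τ, p σ * p τ * R σ τ := by
    simp only [Finset.mul_sum]
    exact Finset.sum_congr rfl fun _ _ => Finset.sum_congr rfl fun _ _ => by ring
  have e4 : ∑ σ, ∑ τ, p σ * p τ = 1 := by
    rw [← Finset.sum_mul_sum, hp, one_mul]
  have h0 : 0 ≤ ∑ σ, ∑ τ, p σ * p τ * (R σ τ - N * q) ^ 2 :=
    Finset.sum_nonneg fun σ _ => Finset.sum_nonneg fun τ _ =>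
      mul_nonneg (mul_nonneg (hp0 σ) (hp0 τ)) (sq_nonneg _)
  have e5 : ∑ σ, ∑ τ, p σ * p τ * (R σ τ - N * q) ^ 2 = ∑ σ, ∑ τ, p σ * p τ * R σ τ ^ 2
      - 2 * N * q * ∑ σ, ∑ τ, p σ * p τ * R σ τ + (N * q) ^ 2 * ∑ σ, ∑ τ, p σ * p τ := by
    simp only [Finset.mul_sum, ← Finset.sum_add_distrib, ← Finset.sum_sub_distrib]
    exact Finset.sum_congr rfl fun _ _ => Finset.sum_congr rfl fun _ _ => by ring
  rw [e5, e4] at h0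
  rw [e3]
  set S := ∑ σ, ∑ τ, p σ * p τ * R σ τ
  set T := ∑ σ, ∑ τ, p σ * p τ * R σ τ ^ 2
  have e6 : β ^ 2 / N * ((T - N) / 2) - (q * (β ^ 2 * S) - β ^ 2 / 2 * (N * q ^ 2 + 1)) =
      β ^ 2 / (2 * N) * (T - 2 * N * q * S + (N * q) ^ 2 * 1) := by
    field_simp; ring
  have : 0 ≤ β ^ 2 / (2 * N) * (T - 2 * N * q * S + (N * q) ^ 2 * 1) :=
    mul_nonneg (by positivity) h0
  linarith

/-- Lipschitz functions of one real variable. -/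
def LipB (B : ℝ) (g : ℝ → ℝ) : Prop := ∀ y z, |g (y + z) - g y| ≤ B * |z|

lemma LipB.continuous {B : ℝ} {g : ℝ → ℝ} (h : LipB B g) (hB : 0 ≤ B) : Continuous g := by
  have : LipschitzWith (Real.toNNReal B) g := by
    apply LipschitzWith.of_dist_le_mul
    intro x y
    have := h y (x - y)
    simpa [Real.dist_eq, hB] using this
  exact this.continuous

lemma stdGauss_abs : Integrable (fun z : ℝ => |z|) stdGauss := stdGauss_int.abs

lemma LipB.int {B : ℝ} {g : ℝ → ℝ} (h : LipB B g) (hB : 0 ≤ B) (y s : ℝ) :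
    Integrable (fun z => g (y + z * s)) stdGauss := by
  have hc := h.continuous hB
  refine ((stdGauss_abs.const_mul (B * |s|)).add (integrable_const |g y|)).mono' (by fun_prop)
    (Eventually.of_forall fun z => ?_)
  have h1 := h y (z * s)
  rw [abs_mul] at h1
  have h2 : |g (y + z * s)| ≤ |g (y + z * s) - g y| + |g y| := by
    have := abs_add_le (g (y + z * s) - g y) (g y); simpa using this
  simp only [Real.norm_eq_abs, Pi.add_apply]
  nlinarith

lemma LipB.int_exp {B : ℝ} {g : ℝ → ℝ} (h : LipB B g) (hB : 0 ≤ B) (m y s : ℝ) :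
    Integrable (fun z => Real.exp (m * g (y + z * s))) stdGauss := by
  have hc := h.continuous hB
  refine ((stdGauss_exp_abs (|m| * (B * |s|))).const_mul (Real.exp (m * g y))).mono'
    (Measurable.aestronglyMeasurable (by fun_prop)) (Eventually.of_forall fun z => ?_)
  rw [Real.norm_eq_abs, abs_of_pos (Real.exp_pos _), ← Real.exp_add]
  refine Real.exp_le_exp.2 ?_
  have h1 := h y (z * s)
  have h2 : m * (g (y + z * s) - g y) ≤ |m| * (B * |z * s|) := by
    refine (le_abs_self _).trans ?_
    rw [abs_mul]
    exact mul_le_mul_of_nonneg_left h1 (abs_nonneg _)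
  rw [abs_mul] at h2
  nlinarith

lemma pStep_mono {B : ℝ} {g g' : ℝ → ℝ} (h : LipB B g) (h' : LipB B g') (hB : 0 ≤ B) {m : ℝ}
    (hm : 0 ≤ m) (s c : ℝ) (hgg : ∀ y, g y ≤ g' y + c) (y : ℝ) : pStep m s g y ≤ pStep m s g' y + c := by
  unfold pStep
  split_ifs with h0
  · have := integral_mono (h.int hB y (Real.sqrt s))
      ((h'.int hB y (Real.sqrt s)).add (integrable_const c)) (fun z => hgg _)
    refine this.trans (le_of_eq ?_)
    simp only [Pi.add_apply]
    rw [integral_add (h'.int hB y _) (integrable_const c)]; simp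
  · have hmp : 0 < m := lt_of_le_of_ne hm (Ne.symm h0)
    have hp := integral_exp_pos (h.int_exp hB m y (Real.sqrt s))
    have hp' := integral_exp_pos (h'.int_exp hB m y (Real.sqrt s))
    have hle : ∫ z, Real.exp (m * g (y + z * Real.sqrt s)) ∂stdGauss ≤
        Real.exp (m * c) * ∫ z, Real.exp (m * g' (y + z * Real.sqrt s)) ∂stdGauss := by
      rw [← integral_const_mul]
      refine integral_mono (h.int_exp hB m y _) ((h'.int_exp hB m y _).const_mul _) fun z => ?_
      simp only
      rw [← Real.exp_add]
      refine Real.exp_le_exp.2 ?_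
      have := mul_le_mul_of_nonneg_left (hgg (y + z * Real.sqrt s)) hm
      linarith
    have := Real.log_le_log hp hle
    rw [Real.log_mul (Real.exp_ne_zero _) hp'.ne', Real.log_exp] at this
    have := mul_le_mul_of_nonneg_left this (inv_pos.2 hmp).le
    rw [mul_add, inv_mul_cancel_left₀ h0] at this
    linarith

lemma pStep_LipB {B : ℝ} {g : ℝ → ℝ} (h : LipB B g) (hB : 0 ≤ B) {m : ℝ}
    (hm : 0 ≤ m) (s : ℝ) : LipB B (pStep m s g) := by
  intro y w
  have hs : LipB B (fun z => g (z + w)) := by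
    intro a b
    have := h (a + w) b
    rwa [show a + w + b = a + b + w by ring] at this
  have e : pStep m s g (y + w) = pStep m s (fun z => g (z + w)) y := by
    unfold pStep
    simp only [add_right_comm]
  have h1 := pStep_mono hs h hB hm s (B * |w|)
    (fun y => by have := abs_le.1 (h y w); linarith [this.2]) y
  have h2 := pStep_mono h hs hB hm s (B * |w|)
    (fun y => by have := abs_le.1 (h y w); linarith [this.1]) y
  rw [e, abs_le]
  constructor <;> linarith

lemma logcosh_LipB (β : ℝ) : LipB |β| (fun y => Real.log (Real.cosh (β * y))) := by
  have key : ∀ a b : ℝ, Real.log (Real.cosh (a + b)) ≤ Real.log (Real.cosh a) + |b| := by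
    intro a b
    have h : Real.cosh (a + b) ≤ Real.cosh a * Real.exp |b| := by
      rw [Real.cosh_eq, Real.cosh_eq]
      have h1 : Real.exp (a + b) ≤ Real.exp a * Real.exp |b| := by
        rw [← Real.exp_add]; exact Real.exp_le_exp.2 (by linarith [le_abs_self b])
      have h2 : Real.exp (-(a + b)) ≤ Real.exp (-a) * Real.exp |b| := by
        rw [← Real.exp_add]; exact Real.exp_le_exp.2 (by linarith [neg_abs_le b])
      linarith
    have := Real.log_le_log (Real.cosh_pos _) h
    rwa [Real.log_mul (Real.cosh_pos _).ne' (Real.exp_ne_zero _), Real.log_exp] at this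
  intro y z
  have h1 := key (β * y) (β * z)
  have h2 := key (β * y + β * z) (-(β * z))
  rw [abs_neg] at h2
  rw [show β * y + β * z + -(β * z) = β * y by ring] at h2
  simp only [mul_add]
  rw [← abs_mul, abs_le]
  constructor <;> linarith

lemma parisi_LipB (X : OrderParam) (β : ℝ) (j : ℕ) : LipB |β| (parisiLevel X.K X.q X.m β j) := by
  induction j with
  | zero => exact logcosh_LipB β
  | succ j ih => exact pStep_LipB ih (abs_nonneg _) (X.m_nonneg (by omega)) _

/-- The field configuration. -/
def yv (N : ℕ) (β : ℝ) (x : Fin N → ℝ) : (Fin N → Bool) → ℝ := fun σ => β * ∑ i, x i * spin (σ i)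

lemma phi_yv (N : ℕ) (β : ℝ) (x : Fin N → ℝ) :
    phi (yv N β x) = ∑ i, (Real.log 2 + Real.log (Real.cosh (β * x i))) := by
  unfold phi yv
  have e : ∀ σ : Fin N → Bool, Real.exp (β * ∑ i, x i * spin (σ i)) =
      ∏ i, Real.exp (β * (x i * spin (σ i))) := by
    intro σ; rw [Finset.mul_sum, Real.exp_sum]
  simp only [e]
  have e2 : ∑ σ : Fin N → Bool, ∏ i, Real.exp (β * (x i * spin (σ i))) =
      ∏ i, ∑ b : Bool, Real.exp (β * (x i * spin b)) := by
    rw [Finset.prod_univ_sum, Fintype.piFinset_univ]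
  have e3 : ∀ i, ∑ b : Bool, Real.exp (β * (x i * spin b)) = 2 * Real.cosh (β * x i) := by
    intro i
    rw [Fintype.sum_bool, Real.cosh_eq]
    simp [spin]
    ring
  rw [e2]
  simp only [e3]
  rw [Real.log_prod (fun i _ => by have := Real.cosh_pos (β * x i); positivity)]
  exact Finset.sum_congr rfl fun i _ => Real.log_mul two_ne_zero (Real.cosh_pos _).ne'

lemma UU_id (N : ℕ) (X : OrderParam) (β : ℝ) (j : ℕ) (x : Fin N → ℝ) :
    UU X (MSc N β) j 1 (yv N β x) = ∑ i, (Real.log 2 + parisiLevel X.K X.q X.m β j (x i)) := by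
  induction j generalizing x with
  | zero => exact phi_yv N β x
  | succ j ih =>
    set f := parisiLevel X.K X.q X.m β j with hf
    have hlip : LipB |β| f := parisi_LipB X β j
    have hB := abs_nonneg β
    have hfc := hlip.continuous hB
    set Δ := X.q (X.K - j) - X.q (X.K - j - 1) with hΔ
    set m := X.m (X.K - j) with hm
    have e0 : UU X (MSc N β) (j + 1) 1 (yv N β x) =
      TT m (gam (MSc N β) (1 * Δ)) (UU X (MSc N β) j 1) (yv N β x) := rfl
    have e1 : ∀ i, parisiLevel X.K X.q X.m β (j + 1) (x i) = pStep m Δ f (x i) := fun i => rfl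
    have hUc := (UU_Lip1 X (MSc N β) j 1).continuous
    have e2 : ∀ z : Fin N → ℝ, UU X (MSc N β) j 1 (yv N β x + lin (MSc N β) Δ z) =
        ∑ i, (Real.log 2 + f (x i + z i * Real.sqrt Δ)) := by
      intro z
      rw [← ih]
      congr 1
      ext σ
      simp only [yv, lin, MSc, Pi.add_apply, Finset.mul_sum, ← Finset.sum_add_distrib]
      exact Finset.sum_congr rfl fun _ _ => by ring
    rw [e0, one_mul]
    simp only [e1]
    unfold TT pStep gam
    have hl := (lin_meas (MSc N β) Δ).aemeasurable (μ := gP (Fin N))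
    split_ifs with h0
    · rw [integral_map hl (Measurable.aestronglyMeasurable (by fun_prop))]
      simp only [e2]
      have hi : ∀ i, Integrable (fun z : ℝ => Real.log 2 + f (x i + z * Real.sqrt Δ)) stdGauss :=
        fun i => (integrable_const _).add (hlip.int hB (x i) _)
      unfold gP
      rw [integral_finsetSum _ fun i _ =>
        integrable_comp_eval (μ := fun _ : Fin N => stdGauss) (i := i) (hi i)]
      refine Finset.sum_congr rfl fun i _ => ?_
      have := integral_comp_eval (μ := fun _ : Fin N => stdGauss) (i := i)
        (f := fun z : ℝ => Real.log 2 + f (x i + z * Real.sqrt Δ)) (hi i).aestronglyMeasurable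
      rw [this, integral_add (integrable_const _) (hlip.int hB (x i) _)]
      simp
    · rw [integral_map hl (Measurable.aestronglyMeasurable (by fun_prop))]
      simp only [e2, Finset.mul_sum, Real.exp_sum]
      have := integral_fintype_prod_eq_prod (𝕜 := ℝ) (μ := fun _ : Fin N => stdGauss)
        (fun i z => Real.exp (m * (Real.log 2 + f (x i + z * Real.sqrt Δ))))
      rw [gP, this]
      have e3 : ∀ i, ∫ z, Real.exp (m * (Real.log 2 + f (x i + z * Real.sqrt Δ))) ∂stdGauss =
          Real.exp (m * Real.log 2) * ∫ z, Real.exp (m * f (x i + z * Real.sqrt Δ)) ∂stdGauss := by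
        intro i
        rw [← integral_const_mul]
        simp only [mul_add, Real.exp_add]
      have hp : ∀ i, 0 < ∫ z, Real.exp (m * f (x i + z * Real.sqrt Δ)) ∂stdGauss := fun i =>
        integral_exp_pos (hlip.int_exp hB m (x i) _)
      simp only [e3]
      rw [Real.log_prod (fun i _ => (mul_pos (Real.exp_pos _) (hp i)).ne'), Finset.mul_sum]
      refine Finset.sum_congr rfl fun i _ => ?_
      rw [Real.log_mul (Real.exp_ne_zero _) (hp i).ne', Real.log_exp, mul_add,
        inv_mul_cancel_left₀ h0]

lemma quenched_eq (N : ℕ) (β h : ℝ) : ∫ Jc, Real.log (ZSK N β h Jc) ∂gaussC N =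
    TT 0 (gam (MAc N β) 1) phi (yv N β fun _ => h) := by
  have hc := (phi_Lip1 (ι := Fin N → Bool)).continuous
  unfold TT gam
  rw [if_pos rfl, integral_map (lin_meas _ _).aemeasurable
    (Measurable.aestronglyMeasurable (by fun_prop)), gaussC_eq, integral_map_equiv]
  congr 1
  ext z
  unfold ZSK phi
  congr 1
  refine Finset.sum_congr rfl fun σ _ => ?_
  congr 1
  simp only [hamSK, yv, lin, MAc, Pi.add_apply, Real.sqrt_one, one_mul]
  rw [Fintype.sum_prod_type, ← Finset.mul_sum]
  have e : ∑ i, ∑ j, (if i < j then β / Real.sqrt N * (spin (σ i) * spin (σ j)) else 0) * z (i, j) =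
      β / Real.sqrt N * ∑ i, ∑ j, (if i < j then
        (MeasurableEquiv.curry (Fin N) (Fin N) ℝ) z i j * spin (σ i) * spin (σ j) else 0) := by
    simp only [Finset.mul_sum]
    refine Finset.sum_congr rfl fun i _ => Finset.sum_congr rfl fun j _ => ?_
    split_ifs
    · change _ = _ * (z (i, j) * _ * _)
      ring
    · ring
  rw [e]
  ring

end Concrete

section Final

lemma OrderParam.q_mono (X : OrderParam) {a b : ℕ} (h : a ≤ b) (hb : b ≤ X.K) : X.q a ≤ X.q b := by
  induction b, h using Nat.le_induction with
  | base => exact le_rfl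
  | succ b hab ih => exact (ih (by omega)).trans (X.hq_mono b (by omega))

lemma OrderParam.xFun_eq (X : OrderParam) {a : ℕ} (ha : a < X.K) {r : ℝ} (h1 : X.q a < r)
    (h2 : r < X.q (a + 1)) : xFun X.K X.q X.m r = X.m (a + 1) := by
  have h3 : r < 1 := by
    have := X.q_mono (a := a + 1) (b := X.K) ha le_rfl
    rw [X.hqK] at this
    linarith
  unfold xFun
  rw [if_neg (not_le.mpr h3)]
  congr 1
  apply le_antisymm
  · exact Nat.sInf_le h2
  · apply le_csInf ⟨a + 1, h2⟩
    intro b hb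
    by_contra hc
    have := X.q_mono (a := b) (b := a) (by omega) ha.le
    have hb' : r < X.q b := hb
    linarith

lemma OrderParam.integral_xFun (X : OrderParam) :
    ∫ r in (0 : ℝ)..1, r * xFun X.K X.q X.m r =
      ∑ a ∈ Finset.range X.K, X.m (a + 1) * (X.q (a + 1) ^ 2 - X.q a ^ 2) / 2 := by
  have he : ∀ a, a < X.K → Set.EqOn (fun r => r * xFun X.K X.q X.m r) (fun r => r * X.m (a + 1))
      (Set.Ioo (X.q a) (X.q (a + 1))) := by
    intro a ha r hr
    simp only [X.xFun_eq ha hr.1 hr.2]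
  have hInt : ∀ a, a < X.K → IntervalIntegrable (fun r => r * xFun X.K X.q X.m r) volume
      (X.q a) (X.q (a + 1)) := by
    intro a ha
    have hc : IntervalIntegrable (fun r => r * X.m (a + 1)) volume (X.q a) (X.q (a + 1)) :=
      Continuous.intervalIntegrable (by fun_prop) _ _
    refine hc.congr_uIoo ?_
    rw [Set.uIoo_of_le (X.hq_mono a ha)]
    exact (he a ha).symm
  have := intervalIntegral.sum_integral_adjacent_intervals hInt
  rw [X.hq0, X.hqK] at this
  rw [← this]
  refine Finset.sum_congr rfl fun a ha => ?_
  have ha' := Finset.mem_range.mp ha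
  rw [intervalIntegral.integral_congr_Ioo_of_le (X.hq_mono a ha') (he a ha'),
    intervalIntegral.integral_mul_const, integral_id]
  ring

lemma abel_id (m q : ℕ → ℝ) (n : ℕ) :
    ∑ b ∈ Finset.range (n + 1), (m (b + 1) - m b) * q b ^ 2 +
      ∑ a ∈ Finset.range n, m (a + 1) * (q (a + 1) ^ 2 - q a ^ 2) =
      m (n + 1) * q n ^ 2 - m 0 * q 0 ^ 2 := by
  induction n with
  | zero => simp; ring
  | succ n ih =>
    rw [Finset.sum_range_succ, Finset.sum_range_succ (fun a => m (a + 1) * _) n]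
    linarith

lemma cc_concrete (X : OrderParam) (N : ℕ) (β : ℝ) :
    cc X ((β ^ 2 * (N - 1) / 2 - N * β ^ 2) / 2) (fun b => β ^ 2 / 2 * (N * X.q b ^ 2 + 1)) X.K =
      -(N * (β ^ 2 / 2 * ∫ r in (0 : ℝ)..1, r * xFun X.K X.q X.m r)) := by
  have h1 := Finset.sum_range_reflect
    (fun b => (X.m (b + 1) - X.m b) / 2 * (β ^ 2 / 2 * (N * X.q b ^ 2 + 1))) (X.K + 1)
  simp only [Nat.add_sub_cancel] at h1
  have h2 := abel_id X.m X.q X.K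
  have h3 := Finset.sum_range_sub X.m (X.K + 1)
  have h4 : ∑ b ∈ Finset.range (X.K + 1),
      (X.m (b + 1) - X.m b) / 2 * (β ^ 2 / 2 * (N * X.q b ^ 2 + 1)) =
      β ^ 2 * N / 4 * ∑ b ∈ Finset.range (X.K + 1), (X.m (b + 1) - X.m b) * X.q b ^ 2 +
      β ^ 2 / 4 * ∑ b ∈ Finset.range (X.K + 1), (X.m (b + 1) - X.m b) := by
    rw [Finset.mul_sum, Finset.mul_sum, ← Finset.sum_add_distrib]
    exact Finset.sum_congr rfl fun _ _ => by ring
  rw [X.hmtop, X.hm0] at h3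
  rw [X.hmtop, X.hm0, X.hqK] at h2
  unfold cc
  rw [h1, h4, h3, X.integral_xFun, ← Finset.sum_div, eq_sub_of_add_eq h2]
  ring

lemma guerra_main (N : ℕ) (hN : 1 ≤ N) (X : OrderParam) (β h : ℝ) :
    quenchedFE N β h ≤ trialAlpha X.K X.q X.m β h := by
  have hN' : (0:ℝ) < N := by exact_mod_cast hN
  have key := abstract_bound X (MSc N β) (MAc N β) (β ^ 2 * (N - 1) / 2) (N * β ^ 2)
    (MAc_diag N hN β) (MSc_diag N β) (fun b => β ^ 2 / 2 * (N * X.q b ^ 2 + 1))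
    (fun b _ p hp0 hp => concrete_var N hN β (X.q b) p hp0 hp) (yv N β fun _ => h)
  rw [UU_id, cc_concrete, ← quenched_eq] at key
  unfold quenchedFE trialAlpha
  rw [inv_mul_le_iff₀ hN']
  simp only [Finset.sum_const, Finset.card_univ, Fintype.card_fin, nsmul_eq_mul] at key
  linarith

end Final

/-- Guerra's broken replica symmetry bound: for every `N ≥ 1`,
`β ≥ 0`, `h ∈ ℝ`, and every piecewise constant functional order parameter `x`,
`N⁻¹ E log Z_N(β, h, J) ≤ ᾱ(β, h; x)`. -/
theorem guerra_bound (N : ℕ) (hN : 1 ≤ N) (X : OrderParam) (β h : ℝ) (hβ : 0 ≤ β) :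
    quenchedFE N β h ≤ trialAlpha X.K X.q X.m β h := by
  exact guerra_main N hN X β h

end
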